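/- Let d ≥ 1, δ ∈ (0,1], and let a : ℝ → 𝕊_δ be measurable. Then there is a constant N = N(d,δ) such that for every u ∈ C₀^∞(ℝ^{1+d}), every κ ≥ 2 and every ρ > 0, setting f = ∂_t u + Σ_{i,j} a^{ij}(t) D_{ij}u, one has osc_{C_ρ}(D²u) ≤ N κ^{(d+2)/2} ( ⨍_{C_{κρ}} |f|² dx dt )^{1/2} + N κ^{−1} 𝕄 f(0,0). -/

import Mathlib

open MeasureTheory Metric Set
open scoped ENNReal NNReal

noncomputable section

abbrev Spc (d : ℕ) : Type := EuclideanSpace ℝ (Fin d)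

abbrev Pt (d : ℕ) : Type := ℝ × Spc d

instance matrixMeasurableSpace (d : ℕ) : MeasurableSpace (Matrix (Fin d) (Fin d) ℝ) :=
  (inferInstance : MeasurableSpace (Fin d → Fin d → ℝ))

/-- Membership in `𝕊_δ`: symmetric `d×d` matrices with
`δ|ξ|² ≤ (aξ,ξ) ≤ δ⁻¹|ξ|²`. -/
def inS (d : ℕ) (δ : ℝ) (a : Matrix (Fin d) (Fin d) ℝ) : Prop :=
  a.IsSymm ∧ ∀ ξ : Fin d → ℝ,
    δ * (∑ i, ξ i ^ 2) ≤ (∑ i, ∑ j, a i j * ξ i * ξ j) ∧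
    (∑ i, ∑ j, a i j * ξ i * ξ j) ≤ δ⁻¹ * (∑ i, ξ i ^ 2)

/-- `{a,u} = a^{ij} a^{kr} u_{ik} u_{jr}`. -/
def bra (d : ℕ) (a u : Matrix (Fin d) (Fin d) ℝ) : ℝ :=
  ∑ i, ∑ j, ∑ k, ∑ r, a i j * a k r * u i k * u j r

/-- Frobenius norm of a `d×d` array. -/
def mnorm {d : ℕ} (m : Fin d → Fin d → ℝ) : ℝ :=
  Real.sqrt (∑ i, ∑ j, m i j ^ 2)

/-- Euclidean norm of a vector given as `Fin d → ℝ`. -/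
def vnorm {d : ℕ} (v : Fin d → ℝ) : ℝ :=
  Real.sqrt (∑ i, v i ^ 2)

/-- Parabolic cylinder `C_R(t,x) = (t, t+R²) × B_R(x)`. -/
def cyl (d : ℕ) (R t : ℝ) (x : Spc d) : Set (Pt d) :=
  Ioo t (t + R ^ 2) ×ˢ ball x R

/-- Time derivative `∂_t u`. -/
def Dt {d : ℕ} (u : Pt d → ℝ) (z : Pt d) : ℝ :=
  deriv (fun s => u (s, z.2)) z.1

/-- Spatial derivative `D_i u`. -/
def Dx {d : ℕ} (i : Fin d) (u : Pt d → ℝ) (z : Pt d) : ℝ :=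
  fderiv ℝ (fun y => u (z.1, y)) z.2 (EuclideanSpace.single i 1)

/-- Second spatial derivative `D_{ij} u = D_i D_j u`. -/
def Dxx {d : ℕ} (i j : Fin d) (u : Pt d → ℝ) : Pt d → ℝ :=
  Dx i (Dx j u)

/-- `u ∈ C₀^∞(ℝ^{1+d})`. -/
def CinfC {d : ℕ} (u : Pt d → ℝ) : Prop :=
  ContDiff ℝ (⊤ : ℕ∞) u ∧ HasCompactSupport u

/-- The kernel `p_{α,k}(s,r)`. -/
def pak (d : ℕ) (α k s r : ℝ) : ℝ :=
  if 0 < s then s ^ (-((d : ℝ) + 2 - α) / 2) * Real.exp (-(r ^ 2) / (k * s)) else 0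

/-- Parabolic distance to the origin `ρ(t,x) = |x| + √|t|`. -/
def prho {d : ℕ} (z : Pt d) : ℝ := ‖z.2‖ + Real.sqrt |z.1|

/-- Average of (the positive part of) `g` over `C`, valued in `ℝ≥0∞`. -/
def aveLin {d : ℕ} (C : Set (Pt d)) (g : Pt d → ℝ) : ℝ≥0∞ :=
  (volume C)⁻¹ * ∫⁻ z in C, ENNReal.ofReal (g z)

/-- Parabolic maximal function `𝕄_β g` (for `g ≥ 0`). -/
def maxF {d : ℕ} (β : ℝ) (g : Pt d → ℝ) (z : Pt d) : ℝ≥0∞ :=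
  ⨆ (ρ : ℝ) (_ : 0 < ρ) (t : ℝ) (x : Spc d) (_ : z ∈ cyl d ρ t x),
    ENNReal.ofReal (ρ ^ β) * aveLin (cyl d ρ t x) g

/-- Oscillation of a matrix-valued function over `C`. -/
def oscC {d : ℕ} (C : Set (Pt d)) (g : Pt d → Fin d → Fin d → ℝ) : ℝ :=
  ⨍ z₁ in C, ⨍ z₂ in C, mnorm (fun i j => g z₁ i j - g z₂ i j)

/-- Mixed norm `‖f‖_{𝕃_{q,p}}` (inner integration in `t`, outer in `x`). -/
def mixedNorm {d : ℕ} (q p : ℝ) (f : Pt d → ℝ) : ℝ :=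
  (∫ x : Spc d, (∫ t : ℝ, |f (t, x)| ^ q) ^ (p / q)) ^ (1 / p)

/-- Mixed norm on a set `Γ`. -/
def mixedNormOn {d : ℕ} (q p : ℝ) (Γ : Set (Pt d)) (f : Pt d → ℝ) : ℝ :=
  mixedNorm q p (Γ.indicator f)

/-- Normalized (averaged) mixed norm over the cylinder `C_R(t,x)`, in `ℝ≥0∞`. -/
def cylNormL {d : ℕ} (q p R t : ℝ) (x : Spc d) (f : Pt d → ℝ) : ℝ≥0∞ :=
  ((volume (ball x R))⁻¹ * ∫⁻ y in ball x R,
      ((volume (Ioo t (t + R ^ 2)))⁻¹ * ∫⁻ s in Ioo t (t + R ^ 2),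
        ENNReal.ofReal |f (s, y)| ^ q) ^ (p / q)) ^ (1 / p)

/-- Mixed norm on a set, valued in `ℝ≥0∞`. -/
def mixedNormLe {d : ℕ} (q p : ℝ) (Γ : Set (Pt d)) (f : Pt d → ℝ) : ℝ≥0∞ :=
  (∫⁻ x : Spc d, (∫⁻ t : ℝ, ENNReal.ofReal |Γ.indicator f (t, x)| ^ q) ^ (p / q)) ^ (1 / p)

/-- `ã_C(t)`: average of `a(t,·)` over the ball of the cylinder. -/
def aTilde {d : ℕ} (a : Pt d → Matrix (Fin d) (Fin d) ℝ) (R : ℝ) (x₀ : Spc d) (t : ℝ)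
    (i j : Fin d) : ℝ :=
  ⨍ y in ball x₀ R, a (t, y) i j

/-- The mean oscillation of `a` w.r.t. `x` over one cylinder. -/
def aSharpCyl {d : ℕ} (a : Pt d → Matrix (Fin d) (Fin d) ℝ) (R t₀ : ℝ) (x₀ : Spc d) : ℝ≥0∞ :=
  (volume (cyl d R t₀ x₀))⁻¹ * ∫⁻ z in cyl d R t₀ x₀,
    ENNReal.ofReal (mnorm (fun i j => a z i j - aTilde a R x₀ z.1 i j))

/-- `a^♯`. -/
def aSharp {d : ℕ} (a : Pt d → Matrix (Fin d) (Fin d) ℝ) : ℝ≥0∞ :=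
  ⨆ (R : ℝ) (_ : 0 < R) (t₀ : ℝ) (x₀ : Spc d), aSharpCyl a R t₀ x₀

/-- `a^♯_ρ` (only cylinders of radius `≤ ρa`). -/
def aSharpRho {d : ℕ} (a : Pt d → Matrix (Fin d) (Fin d) ℝ) (ρa : ℝ) : ℝ≥0∞ :=
  ⨆ (R : ℝ) (_ : 0 < R) (_ : R ≤ ρa) (t₀ : ℝ) (x₀ : Spc d), aSharpCyl a R t₀ x₀

/-- Homogeneous Morrey norm `‖g‖_{Ė_{p,β}}`. -/
def morreyP {d : ℕ} (p β : ℝ) (g : Pt d → ℝ) : ℝ≥0∞ :=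
  ⨆ (ρ : ℝ) (_ : 0 < ρ) (t : ℝ) (x : Spc d),
    ENNReal.ofReal (ρ ^ β) *
      ((volume (cyl d ρ t x))⁻¹ * ∫⁻ z in cyl d ρ t x, ENNReal.ofReal |g z| ^ p) ^ (1 / p)

/-- Homogeneous mixed-norm Morrey norm `‖g‖_{Ė_{q,p,β}}`. -/
def morreyQP {d : ℕ} (q p β : ℝ) (g : Pt d → ℝ) : ℝ≥0∞ :=
  ⨆ (ρ : ℝ) (_ : 0 < ρ) (t : ℝ) (x : Spc d),
    ENNReal.ofReal (ρ ^ β) * cylNormL q p ρ t x g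

/-- Inhomogeneous mixed-norm Morrey norm `‖g‖_{E_{q,p,β}}` (radii `ρ ∈ (0,1]`). -/
def morreyI {d : ℕ} (q p β : ℝ) (g : Pt d → ℝ) : ℝ≥0∞ :=
  ⨆ (ρ : ℝ) (_ : 0 < ρ) (_ : ρ ≤ 1) (t : ℝ) (x : Spc d),
    ENNReal.ofReal (ρ ^ β) * cylNormL q p ρ t x g

/-- `b̄_{q',p',ρb}` for a vector field `b`. -/
def bBar {d : ℕ} (q' p' : ℝ) (b : Pt d → Fin d → ℝ) (ρb : ℝ) : ℝ≥0∞ :=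
  ⨆ (R : ℝ) (_ : 0 < R) (_ : R ≤ ρb) (t : ℝ) (x : Spc d),
    ENNReal.ofReal R * cylNormL q' p' R t x (fun z => vnorm (b z))

/-- Test function supported in the open set `Q`. -/
def IsTest {d : ℕ} (Q : Set (Pt d)) (φ : Pt d → ℝ) : Prop :=
  ContDiff ℝ (⊤ : ℕ∞) φ ∧ HasCompactSupport φ ∧ tsupport φ ⊆ Q

/-- `ut` is the weak time derivative of `u` on `Q`. -/
def WeakDtOn {d : ℕ} (Q : Set (Pt d)) (u ut : Pt d → ℝ) : Prop :=
  ∀ φ, IsTest Q φ → ∫ z in Q, u z * Dt φ z = - ∫ z in Q, ut z * φ z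

/-- `ui` is the weak `i`-th spatial derivative of `u` on `Q`. -/
def WeakDxOn {d : ℕ} (Q : Set (Pt d)) (i : Fin d) (u ui : Pt d → ℝ) : Prop :=
  ∀ φ, IsTest Q φ → ∫ z in Q, u z * Dx i φ z = - ∫ z in Q, ui z * φ z

/-!
Write `L = ∂ₜ + aⁱʲ(t) Dᵢⱼ` and `f = L u`. In the spatial Fourier variable the equation is an ODE
in time, so `-D²u` is the limit, as `ε → 0`, of the integrals of `f` against the Hessian of the
Gaussian fundamental solution of `L`, with all time lags lengthened by `ε`. The part of `f` inside
`C_{κρ}` is estimated in `L²` by Plancherel, with a bound independent of `ε`; passing from `C_{κρ}`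
to `C_ρ` in the averages costs the factor `κ^((d+2)/2)`. For the part outside, the kernels seen from
two points of `C_ρ` differ by at most `N ρ / r^(d+3)` at parabolic distance `r ≥ κρ`, and summing
over cylinders of growing radius bounds the difference of the two integrals by `N κ⁻¹ 𝕄f`.
-/

open scoped FourierTransform ContDiff

section GaussianSymbol

variable {V : Type*} [NormedAddCommGroup V] [InnerProductSpace ℝ V]

/-- Two-sided ellipticity of a bilinear form, with the upper bound imposed on the whole form and
not only on its diagonal. -/
structure IsElliptic (l u : ℝ) (A : V →L[ℝ] V →L[ℝ] ℝ) : Prop where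
  le_apply : ∀ v, l * ‖v‖ ^ 2 ≤ A v v
  norm_le : ‖A‖ ≤ u

/-- The Gaussian `v ↦ exp (-A(v, v))` attached to a bilinear form; it is complex valued because it
serves as a Fourier multiplier. -/
def gaussianSymbol (A : V →L[ℝ] V →L[ℝ] ℝ) (v : V) : ℂ :=
  Complex.exp (-(A v v : ℝ))

/-- The first `n` derivatives of `f` are bounded by `M (1 + |v|) ^ m exp (-l |v|²)`. Tracking `M`
makes the resulting Fourier decay linear in the size of the symbol. -/
structure HasGaussianDecay (n m : ℕ) (l M : ℝ) (f : V → ℂ) : Prop where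
  contDiff : ContDiff ℝ ∞ f
  norm_iteratedFDeriv_le : ∀ k ≤ n, ∀ v,
    ‖iteratedFDeriv ℝ k f v‖ ≤ M * ((1 + ‖v‖) ^ m * Real.exp (-l * ‖v‖ ^ 2))

variable {A B : V →L[ℝ] V →L[ℝ] ℝ} {l u : ℝ}

lemma norm_gaussianSymbol (A : V →L[ℝ] V →L[ℝ] ℝ) (v : V) :
    ‖gaussianSymbol A v‖ = Real.exp (-A v v) := by
  rw [gaussianSymbol, ← Complex.ofReal_neg, Complex.norm_exp_ofReal]

lemma IsElliptic.norm_gaussianSymbol_le (hA : IsElliptic l u A) (v : V) :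
    ‖gaussianSymbol A v‖ ≤ Real.exp (-l * ‖v‖ ^ 2) := by
  rw [norm_gaussianSymbol]
  gcongr
  linarith [hA.le_apply v]

lemma apply_apply_self_le (A : V →L[ℝ] V →L[ℝ] ℝ) (v : V) : A v v ≤ ‖A‖ * ‖v‖ ^ 2 := by
  have := (le_abs_self _).trans (A.le_opNorm₂ v v)
  linarith

lemma contDiff_quadratic (A : V →L[ℝ] V →L[ℝ] ℝ) : ContDiff ℝ ∞ fun v => A v v := by
  fun_prop

lemma fderiv_quadratic (A : V →L[ℝ] V →L[ℝ] ℝ) :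
    fderiv ℝ (fun v => A v v) = (A + A.flip : V →L[ℝ] V →L[ℝ] ℝ) := by
  ext v w
  have hv := A.hasFDerivAt_of_bilinear (hasFDerivAt_id v) (hasFDerivAt_id v)
  simp only [id_eq] at hv
  rw [hv.fderiv]
  simp

lemma norm_iteratedFDeriv_quadratic_le {v : V} {D : ℝ} (hD₁ : 2 * ‖A‖ * ‖v‖ ≤ D)
    (hD₂ : 2 * ‖A‖ ≤ D ^ 2) {i : ℕ} (hi : 1 ≤ i) :
    ‖iteratedFDeriv ℝ i (fun v => A v v) v‖ ≤ D ^ i := by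
  have hsum : ‖A + A.flip‖ ≤ 2 * ‖A‖ := by
    linarith [norm_add_le A A.flip, A.opNorm_flip]
  have hD : 0 ≤ D := le_trans (by positivity) hD₁
  obtain ⟨n, rfl⟩ : ∃ n, i = n + 1 := ⟨i - 1, by omega⟩
  rw [← norm_iteratedFDeriv_fderiv, fderiv_quadratic]
  match n with
  | 0 =>
    rw [norm_iteratedFDeriv_zero, zero_add, pow_one]
    exact ((A + A.flip).le_of_opNorm_le hsum v).trans hD₁
  | 1 =>
    rw [norm_iteratedFDeriv_one, ContinuousLinearMap.fderiv]
    exact hsum.trans hD₂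
  | n + 2 =>
    rw [← norm_iteratedFDeriv_fderiv]
    have hconst : fderiv ℝ (A + A.flip : V →L[ℝ] V →L[ℝ] ℝ) = fun _ => A + A.flip :=
      funext fun _ => ContinuousLinearMap.fderiv _
    rw [hconst, iteratedFDeriv_const_of_ne (Nat.succ_ne_zero n)]
    simpa using pow_nonneg hD _

lemma contDiff_cexp_neg_ofReal : ContDiff ℝ ∞ fun r : ℝ => Complex.exp (-(r : ℂ)) :=
  Complex.ofRealCLM.contDiff.neg.cexp

lemma norm_iteratedFDeriv_cexp_neg_ofReal (i : ℕ) (r : ℝ) :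
    ‖iteratedFDeriv ℝ i (fun r : ℝ => Complex.exp (-(r : ℂ))) r‖ = Real.exp (-r) := by
  have hcomp : (fun r : ℝ => Complex.exp (-(r : ℂ)))
      = Complex.ofRealLI ∘ fun r : ℝ => Real.exp (-r) := by ext; simp
  have hexp : ContDiff ℝ ∞ fun r : ℝ => Real.exp (-r) := by fun_prop
  rw [hcomp, Complex.ofRealLI.norm_iteratedFDeriv_comp_left (n := ∞) hexp.contDiffAt
    (mod_cast le_top), norm_iteratedFDeriv_eq_norm_iteratedDeriv, iteratedDeriv_comp_neg,
    iteratedDeriv_eq_iterate, Real.iter_deriv_exp]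
  simp

lemma contDiff_gaussianSymbol (A : V →L[ℝ] V →L[ℝ] ℝ) : ContDiff ℝ ∞ (gaussianSymbol A) :=
  contDiff_cexp_neg_ofReal.comp (contDiff_quadratic A)

lemma norm_iteratedFDeriv_gaussianSymbol_le {v : V} {D : ℝ} (hD₁ : 2 * ‖A‖ * ‖v‖ ≤ D)
    (hD₂ : 2 * ‖A‖ ≤ D ^ 2) (k : ℕ) :
    ‖iteratedFDeriv ℝ k (gaussianSymbol A) v‖ ≤ k.factorial * Real.exp (-A v v) * D ^ k :=
  norm_iteratedFDeriv_comp_le contDiff_cexp_neg_ofReal (contDiff_quadratic A)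
    (mod_cast le_top) v (fun i _ => (norm_iteratedFDeriv_cexp_neg_ofReal i _).le)
    fun _ hi _ => norm_iteratedFDeriv_quadratic_le hD₁ hD₂ hi

lemma IsElliptic.hasGaussianDecay (hA : IsElliptic l u A) (n : ℕ) :
    HasGaussianDecay n n l (n.factorial * (1 + 2 * u) ^ n) (gaussianSymbol A) where
  contDiff := contDiff_gaussianSymbol A
  norm_iteratedFDeriv_le k hk v := by
    have hu : 0 ≤ u := (norm_nonneg A).trans hA.norm_le
    set D : ℝ := (1 + 2 * u) * (1 + ‖v‖) with hDdef
    have hD : 1 + 2 * u ≤ D := le_mul_of_one_le_right (by positivity) (by simp)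
    have hD₁ : 2 * ‖A‖ * ‖v‖ ≤ D := by
      rw [hDdef]
      gcongr
      · linarith [hA.norm_le]
      · simp
    have hD₂ : 2 * ‖A‖ ≤ D ^ 2 := by nlinarith [hA.norm_le]
    calc ‖iteratedFDeriv ℝ k (gaussianSymbol A) v‖
        ≤ k.factorial * Real.exp (-A v v) * D ^ k :=
          norm_iteratedFDeriv_gaussianSymbol_le hD₁ hD₂ k
      _ ≤ n.factorial * Real.exp (-l * ‖v‖ ^ 2) * D ^ n := by
          have hexp : Real.exp (-A v v) ≤ Real.exp (-l * ‖v‖ ^ 2) := by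
            gcongr
            linarith [hA.le_apply v]
          gcongr
          linarith
      _ = _ := by rw [hDdef, mul_pow]; ring

lemma one_sub_exp_neg_le_sqrt {r : ℝ} (hr : 0 ≤ r) : 1 - Real.exp (-r) ≤ √r := by
  rcases le_total r 1 with h1 | h1
  · have : r ≤ √r := Real.le_sqrt_of_sq_le (by nlinarith)
    linarith [Real.add_one_le_exp (-r)]
  · linarith [Real.exp_pos (-r), Real.one_le_sqrt.mpr h1]

lemma norm_one_sub_gaussianSymbol_le {v : V} (hB : 0 ≤ B v v) :
    ‖1 - gaussianSymbol B v‖ ≤ √‖B‖ * ‖v‖ := by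
  calc ‖1 - gaussianSymbol B v‖
      = 1 - Real.exp (-B v v) := by
        rw [gaussianSymbol, ← Complex.ofReal_neg, ← Complex.ofReal_exp, ← Complex.ofReal_one,
          ← Complex.ofReal_sub, Complex.norm_real, Real.norm_of_nonneg]
        linarith [Real.exp_le_one_iff.mpr (neg_nonpos.mpr hB)]
    _ ≤ √(B v v) := one_sub_exp_neg_le_sqrt hB
    _ ≤ √(‖B‖ * ‖v‖ ^ 2) := Real.sqrt_le_sqrt (apply_apply_self_le B v)
    _ = √‖B‖ * ‖v‖ := by rw [Real.sqrt_mul (norm_nonneg B), Real.sqrt_sq (norm_nonneg v)]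

-- A derivative of `exp (-B)` costs `√‖B‖ (1 + |v|)`; all but one of these factors `√‖B‖` are then
-- absorbed into the constant.
lemma norm_iteratedFDeriv_succ_one_sub_gaussianSymbol_le (hB : IsElliptic 0 u B) (j : ℕ) (v : V) :
    ‖iteratedFDeriv ℝ (j + 1) (fun v => 1 - gaussianSymbol B v) v‖ ≤
      √‖B‖ * ((j + 1).factorial * (2 * (1 + u) ^ 2) ^ (j + 1)) * (1 + ‖v‖) ^ (j + 1) := by
  set b := √‖B‖
  have hb : 0 ≤ b := Real.sqrt_nonneg _
  have hbB : b ^ 2 = ‖B‖ := Real.sq_sqrt (norm_nonneg B)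
  have hu : 0 ≤ u := (norm_nonneg B).trans hB.norm_le
  have hbu : b ≤ 1 + u := by nlinarith [hB.norm_le, sq_nonneg (b - 1)]
  set D : ℝ := b * (2 * (1 + u) * (1 + ‖v‖)) with hDdef
  have hD₁ : 2 * ‖B‖ * ‖v‖ ≤ D := calc
    2 * ‖B‖ * ‖v‖ = b * (2 * b * ‖v‖) := by rw [← hbB]; ring
    _ ≤ D := by rw [hDdef]; gcongr; simp
  have hD₂ : 2 * ‖B‖ ≤ D ^ 2 := by
    have hfactor : 2 ≤ 2 * (1 + u) * (1 + ‖v‖) := by nlinarith [norm_nonneg v]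
    rw [← hbB, hDdef, mul_pow, mul_comm]
    gcongr
    nlinarith
  have hderiv : iteratedFDeriv ℝ (j + 1) (fun v => 1 - gaussianSymbol B v) v
      = -iteratedFDeriv ℝ (j + 1) (gaussianSymbol B) v := by
    rw [fun_iteratedFDeriv_sub_apply contDiffAt_const
      ((contDiff_gaussianSymbol B).contDiffAt.of_le (mod_cast le_top)),
      iteratedFDeriv_const_of_ne (Nat.succ_ne_zero j)]
    simp
  calc ‖iteratedFDeriv ℝ (j + 1) (fun v => 1 - gaussianSymbol B v) v‖
      ≤ (j + 1).factorial * Real.exp (-B v v) * D ^ (j + 1) := by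
        rw [hderiv, norm_neg]
        exact norm_iteratedFDeriv_gaussianSymbol_le hD₁ hD₂ _
    _ ≤ (j + 1).factorial * 1 * D ^ (j + 1) := by
        gcongr
        simpa using hB.le_apply v
    _ = (j + 1).factorial * (b * b ^ j * (2 * (1 + u) * (1 + ‖v‖)) ^ (j + 1)) := by
        rw [hDdef, mul_pow]; ring
    _ ≤ (j + 1).factorial *
          (b * (1 + u) ^ (j + 1) * (2 * (1 + u) * (1 + ‖v‖)) ^ (j + 1)) := by
        gcongr ?_ * (?_ * ?_ * ?_)
        exact (pow_le_pow_left₀ hb hbu j).trans (pow_le_pow_right₀ (by linarith) (by simp))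
    _ = b * ((j + 1).factorial * (2 * (1 + u) ^ 2) ^ (j + 1)) * (1 + ‖v‖) ^ (j + 1) := by
        simp only [mul_pow, ← pow_mul]; ring

lemma hasGaussianDecay_one_sub_gaussianSymbol (hB : IsElliptic 0 u B) (n : ℕ) :
    HasGaussianDecay n (n + 1) 0 (√‖B‖ * (n.factorial * (2 * (1 + u) ^ 2) ^ n))
      (fun v => 1 - gaussianSymbol B v) where
  contDiff := contDiff_const.sub (contDiff_gaussianSymbol B)
  norm_iteratedFDeriv_le k hk v := by
    have hu : 0 ≤ u := (norm_nonneg B).trans hB.norm_le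
    have hbase : 1 ≤ 2 * (1 + u) ^ 2 := by nlinarith
    have hconst : (1 : ℝ) ≤ n.factorial * (2 * (1 + u) ^ 2) ^ n :=
      one_le_mul_of_one_le_of_one_le (mod_cast n.factorial_pos) (one_le_pow₀ hbase)
    rw [neg_zero, zero_mul, Real.exp_zero, mul_one]
    rcases k with _ | j
    · calc ‖iteratedFDeriv ℝ 0 (fun v => 1 - gaussianSymbol B v) v‖
          ≤ √‖B‖ * 1 * ‖v‖ := by
            rw [norm_iteratedFDeriv_zero, mul_one]
            exact norm_one_sub_gaussianSymbol_le (by simpa using hB.le_apply v)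
        _ ≤ √‖B‖ * (n.factorial * (2 * (1 + u) ^ 2) ^ n) * (1 + ‖v‖) ^ (n + 1) := by
            gcongr
            calc ‖v‖ ≤ 1 + ‖v‖ := by simp
              _ ≤ (1 + ‖v‖) ^ (n + 1) := le_self_pow₀ (by simp) (by simp)
    · refine (norm_iteratedFDeriv_succ_one_sub_gaussianSymbol_le hB j v).trans ?_
      gcongr
      · simp
      · omega

lemma HasGaussianDecay.mul {n m m' : ℕ} {l' M M' : ℝ} {f g : V → ℂ}
    (hf : HasGaussianDecay n m l M f) (hg : HasGaussianDecay n m' l' M' g) :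
    HasGaussianDecay n (m + m') (l + l') (2 ^ n * (M * M')) (fun v => f v * g v) where
  contDiff := hf.contDiff.mul hg.contDiff
  norm_iteratedFDeriv_le k hk v := by
    have hM : 0 ≤ M * ((1 + ‖v‖) ^ m * Real.exp (-l * ‖v‖ ^ 2)) :=
      (norm_nonneg _).trans (hf.norm_iteratedFDeriv_le 0 n.zero_le v)
    have hM' : 0 ≤ M' * ((1 + ‖v‖) ^ m' * Real.exp (-l' * ‖v‖ ^ 2)) :=
      (norm_nonneg _).trans (hg.norm_iteratedFDeriv_le 0 n.zero_le v)
    calc ‖iteratedFDeriv ℝ k (fun v => f v * g v) v‖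
        ≤ ∑ i ∈ Finset.range (k + 1), (k.choose i : ℝ) * ‖iteratedFDeriv ℝ i f v‖ *
            ‖iteratedFDeriv ℝ (k - i) g v‖ :=
          norm_iteratedFDeriv_mul_le hf.contDiff hg.contDiff v (mod_cast le_top)
      _ ≤ ∑ i ∈ Finset.range (k + 1), (k.choose i : ℝ) *
            (M * ((1 + ‖v‖) ^ m * Real.exp (-l * ‖v‖ ^ 2))) *
            (M' * ((1 + ‖v‖) ^ m' * Real.exp (-l' * ‖v‖ ^ 2))) := by
          gcongr with i hi
          · exact hf.norm_iteratedFDeriv_le i (by grind) v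
          · exact hg.norm_iteratedFDeriv_le (k - i) (by omega) v
      _ = 2 ^ k * (M * ((1 + ‖v‖) ^ m * Real.exp (-l * ‖v‖ ^ 2)) *
            (M' * ((1 + ‖v‖) ^ m' * Real.exp (-l' * ‖v‖ ^ 2)))) := by
          simp_rw [mul_assoc]
          rw [← Finset.sum_mul]
          congr 1
          exact_mod_cast k.sum_range_choose
      _ ≤ 2 ^ n * (M * ((1 + ‖v‖) ^ m * Real.exp (-l * ‖v‖ ^ 2)) *
            (M' * ((1 + ‖v‖) ^ m' * Real.exp (-l' * ‖v‖ ^ 2)))) := by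
          gcongr
          norm_num
      _ = _ := by rw [neg_add, add_mul, Real.exp_add]; ring

lemma hasGaussianDecay_gaussianSymbol_sub (hA : IsElliptic l u A) (hB : IsElliptic 0 u B)
    (n : ℕ) :
    HasGaussianDecay n (n + (n + 1)) l (2 ^ n * (n.factorial * (1 + 2 * u) ^ n *
      (√‖B‖ * (n.factorial * (2 * (1 + u) ^ 2) ^ n))))
      (fun v => gaussianSymbol A v - gaussianSymbol (A + B) v) := by
  have hprod := (hA.hasGaussianDecay n).mul (hasGaussianDecay_one_sub_gaussianSymbol hB n)
  rw [add_zero] at hprod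
  convert hprod using 2 with v
  rw [mul_sub, mul_one]
  simp [gaussianSymbol, ← Complex.exp_add, add_comm]

end GaussianSymbol

section HasGaussianDecay

variable {V : Type*} [NormedAddCommGroup V] [InnerProductSpace ℝ V] {n m : ℕ} {l M : ℝ} {f : V → ℂ}

lemma HasGaussianDecay.pow_mul_norm_iteratedFDeriv_le (hf : HasGaussianDecay n m l M f)
    {i j k : ℕ} (hi : i ≤ k) (hj : j ≤ n) (v : V) :
    ‖v‖ ^ i * ‖iteratedFDeriv ℝ j f v‖ ≤ M * ((1 + ‖v‖) ^ (k + m) * Real.exp (-l * ‖v‖ ^ 2)) :=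
  calc ‖v‖ ^ i * ‖iteratedFDeriv ℝ j f v‖
      ≤ (1 + ‖v‖) ^ k * (M * ((1 + ‖v‖) ^ m * Real.exp (-l * ‖v‖ ^ 2))) := by
        gcongr
        · exact (pow_le_pow_left₀ (norm_nonneg v) (by simp) i).trans
            (pow_le_pow_right₀ (by simp) hi)
        · exact hf.norm_iteratedFDeriv_le j hj v
    _ = _ := by rw [pow_add]; ring

end HasGaussianDecay

section FourierDecay

variable {V : Type*} [NormedAddCommGroup V] [InnerProductSpace ℝ V] [FiniteDimensional ℝ V]
  [MeasurableSpace V] [BorelSpace V]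

lemma integrable_exp_neg_mul_sq_norm {l : ℝ} (hl : 0 < l) :
    Integrable fun v : V => Real.exp (-l * ‖v‖ ^ 2) := by
  have h := GaussianFourier.integrable_cexp_neg_mul_sq_norm_add (V := V) (b := l) (by simpa) 0 0
  refine h.norm.congr (.of_forall fun v => ?_)
  simp only [zero_mul, add_zero, Complex.norm_exp]
  norm_cast

lemma one_add_pow_le_mul_exp (m : ℕ) {l r : ℝ} (hl : 0 < l) (hr : 0 ≤ r) :
    (1 + r) ^ m ≤ m.factorial * Real.exp (1 + 1 / (4 * l)) * Real.exp (l * r ^ 2) := by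
  have hpow : (1 + r) ^ m ≤ Real.exp (1 + r) * m.factorial := by
    rw [← div_le_iff₀ (by positivity)]
    exact Real.pow_div_factorial_le_exp (1 + r) (by positivity) m
  have hsquare : r ≤ 1 / (4 * l) + l * r ^ 2 := by
    have : 0 ≤ l * (r - 1 / (2 * l)) ^ 2 := by positivity
    have : l * (r - 1 / (2 * l)) ^ 2 = l * r ^ 2 - r + 1 / (4 * l) := by field_simp; ring
    linarith
  calc (1 + r) ^ m ≤ Real.exp (1 + r) * m.factorial := hpow
    _ ≤ Real.exp (1 + 1 / (4 * l) + l * r ^ 2) * m.factorial := by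
        refine mul_le_mul_of_nonneg_right (Real.exp_le_exp.mpr ?_) (by positivity)
        linarith
    _ = _ := by rw [Real.exp_add (1 + 1 / (4 * l))]; ring

lemma integrable_one_add_norm_pow_mul_exp (m : ℕ) {l : ℝ} (hl : 0 < l) :
    Integrable fun v : V => (1 + ‖v‖) ^ m * Real.exp (-l * ‖v‖ ^ 2) := by
  refine ((integrable_exp_neg_mul_sq_norm (half_pos hl)).const_mul
    (m.factorial * Real.exp (1 + 1 / (4 * (l / 2))))).mono'
    (Continuous.aestronglyMeasurable (by fun_prop)) (.of_forall fun v => ?_)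
  rw [Real.norm_of_nonneg (by positivity)]
  calc (1 + ‖v‖) ^ m * Real.exp (-l * ‖v‖ ^ 2)
      ≤ m.factorial * Real.exp (1 + 1 / (4 * (l / 2))) * Real.exp (l / 2 * ‖v‖ ^ 2) *
          Real.exp (-l * ‖v‖ ^ 2) := by
        gcongr
        exact one_add_pow_le_mul_exp m (half_pos hl) (norm_nonneg v)
    _ = m.factorial * Real.exp (1 + 1 / (4 * (l / 2))) * Real.exp (-(l / 2) * ‖v‖ ^ 2) := by
        rw [mul_assoc, ← Real.exp_add]
        ring_nf

namespace HasGaussianDecay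

variable {n m : ℕ} {l M : ℝ} {f : V → ℂ}

lemma integrable_pow_mul_norm_iteratedFDeriv (hl : 0 < l) (hf : HasGaussianDecay n m l M f)
    (i : ℕ) {j : ℕ} (hj : j ≤ n) : Integrable fun v => ‖v‖ ^ i * ‖iteratedFDeriv ℝ j f v‖ := by
  refine ((integrable_one_add_norm_pow_mul_exp (i + m) hl).const_mul M).mono'
    (Continuous.aestronglyMeasurable ?_) (.of_forall fun v => ?_)
  · have := hf.contDiff.continuous_iteratedFDeriv (m := j) (mod_cast le_top)
    fun_prop
  · rw [Real.norm_of_nonneg (by positivity)]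
    exact hf.pow_mul_norm_iteratedFDeriv_le le_rfl hj v

lemma contDiff_fourier (hl : 0 < l) (hf : HasGaussianDecay n m l M f) : ContDiff ℝ ∞ (𝓕 f) :=
  Real.contDiff_fourier fun i _ => by
    simpa using hf.integrable_pow_mul_norm_iteratedFDeriv hl i n.zero_le

end HasGaussianDecay

lemma exists_norm_pow_mul_iteratedFDeriv_fourier_le (k n m : ℕ) {l : ℝ} (hl : 0 < l) :
    ∃ C : ℝ, 0 ≤ C ∧ ∀ {N : ℕ} {M : ℝ} {f : V → ℂ}, HasGaussianDecay N m l M f → n ≤ N →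
      ∀ x, ‖x‖ ^ n * ‖iteratedFDeriv ℝ k (𝓕 f) x‖ ≤ C * M := by
  set I : ℝ := ∫ v : V, (1 + ‖v‖) ^ (k + m) * Real.exp (-l * ‖v‖ ^ 2) with hI
  refine ⟨(2 * Real.pi) ^ k * (2 * k + 2) ^ n * (((k + 1) * (n + 1)) * I), ?_,
    fun {N M f} hf hn x => ?_⟩
  · have hI_nonneg : 0 ≤ I := integral_nonneg fun v => by positivity
    exact mul_nonneg (by positivity) (mul_nonneg (by positivity) hI_nonneg)
  have hterm : ∀ p ∈ Finset.range (k + 1) ×ˢ Finset.range (n + 1),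
      ∫ v, ‖v‖ ^ p.1 * ‖iteratedFDeriv ℝ p.2 f v‖ ≤ M * I := by
    intro p hp
    obtain ⟨hp1, hp2⟩ : p.1 ≤ k ∧ p.2 ≤ N := by
      simp only [Finset.mem_product, Finset.mem_range] at hp
      omega
    rw [hI, ← integral_const_mul]
    exact integral_mono (hf.integrable_pow_mul_norm_iteratedFDeriv hl _ hp2)
      ((integrable_one_add_norm_pow_mul_exp _ hl).const_mul M)
      (hf.pow_mul_norm_iteratedFDeriv_le hp1 hp2)
  calc ‖x‖ ^ n * ‖iteratedFDeriv ℝ k (𝓕 f) x‖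
      ≤ (2 * Real.pi) ^ k * (2 * k + 2) ^ n * ∑ p ∈ Finset.range (k + 1) ×ˢ Finset.range (n + 1),
          ∫ v, ‖v‖ ^ p.1 * ‖iteratedFDeriv ℝ p.2 f v‖ :=
        Real.pow_mul_norm_iteratedFDeriv_fourier_le (K := ⊤) (N := N)
          (hf.contDiff.of_le (mod_cast le_top))
          (fun i j _ hj => hf.integrable_pow_mul_norm_iteratedFDeriv hl i (mod_cast hj))
          le_top (mod_cast hn) x
    _ ≤ (2 * Real.pi) ^ k * (2 * k + 2) ^ n * (((k + 1) * (n + 1)) * (M * I)) := by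
        gcongr
        refine (Finset.sum_le_card_nsmul _ _ _ hterm).trans_eq ?_
        simp [mul_assoc]
    _ = _ := by ring

lemma exists_one_add_norm_pow_mul_iteratedFDeriv_fourier_le (k n m : ℕ) {l : ℝ} (hl : 0 < l) :
    ∃ C : ℝ, 0 ≤ C ∧ ∀ {M : ℝ} {f : V → ℂ}, HasGaussianDecay n m l M f →
      ∀ x, (1 + ‖x‖) ^ n * ‖iteratedFDeriv ℝ k (𝓕 f) x‖ ≤ C * M := by
  obtain ⟨C₀, hC₀, h₀⟩ := exists_norm_pow_mul_iteratedFDeriv_fourier_le (V := V) k 0 m hl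
  obtain ⟨C, hC, hn⟩ := exists_norm_pow_mul_iteratedFDeriv_fourier_le (V := V) k n m hl
  refine ⟨2 ^ (n - 1) * (C₀ + C), by positivity, fun {M f} hf x => ?_⟩
  calc (1 + ‖x‖) ^ n * ‖iteratedFDeriv ℝ k (𝓕 f) x‖
      ≤ 2 ^ (n - 1) * (1 ^ n + ‖x‖ ^ n) * ‖iteratedFDeriv ℝ k (𝓕 f) x‖ := by
        gcongr
        exact add_pow_le zero_le_one (norm_nonneg x) n
    _ = 2 ^ (n - 1) * (‖x‖ ^ 0 * ‖iteratedFDeriv ℝ k (𝓕 f) x‖ +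
          ‖x‖ ^ n * ‖iteratedFDeriv ℝ k (𝓕 f) x‖) := by ring
    _ ≤ 2 ^ (n - 1) * (C₀ * M + C * M) := by
        refine mul_le_mul_of_nonneg_left (add_le_add ?_ ?_) (by positivity)
        exacts [h₀ hf n.zero_le x, hn hf le_rfl x]
    _ = _ := by ring

lemma fourier_comp_smul (f : V → ℂ) {c : ℝ} (hc : 0 < c) (x : V) :
    𝓕 (fun v => f (c • v)) x = (c ^ Module.finrank ℝ V)⁻¹ • 𝓕 f (c⁻¹ • x) := by
  have hrescale := Measure.integral_comp_smul volume
    (fun v : V => Real.fourierChar (-inner ℝ v (c⁻¹ • x)) • f v) c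
  rw [abs_of_pos (by positivity)] at hrescale
  rw [Real.fourier_eq, Real.fourier_eq, ← hrescale]
  refine integral_congr_ae (.of_forall fun v => ?_)
  simp only [inner_smul_left, inner_smul_right, conj_trivial]
  rw [inv_mul_cancel_left₀ hc.ne']

lemma norm_iteratedFDeriv_fourier_comp_smul_le {f : V → ℂ} (hf : ContDiff ℝ ∞ (𝓕 f)) {k n : ℕ}
    {K : ℝ} (hK : ∀ x, (1 + ‖x‖) ^ (Module.finrank ℝ V + k + n) *
      ‖iteratedFDeriv ℝ k (𝓕 f) x‖ ≤ K) {c : ℝ} (hc : 0 < c) (x : V) :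
    ‖iteratedFDeriv ℝ k (𝓕 fun v => f (c • v)) x‖ ≤
      K * c ^ n / (c + ‖x‖) ^ (Module.finrank ℝ V + k + n) := by
  set d := Module.finrank ℝ V
  have hscaled : ContDiff ℝ k fun x => 𝓕 f (c⁻¹ • x) :=
    (hf.comp (contDiff_const_smul c⁻¹)).of_le (mod_cast le_top)
  have hderiv : iteratedFDeriv ℝ k (𝓕 fun v => f (c • v)) x
      = (c ^ d)⁻¹ • c⁻¹ ^ k • iteratedFDeriv ℝ k (𝓕 f) (c⁻¹ • x) := by
    rw [show (𝓕 fun v => f (c • v)) = fun x => (c ^ d)⁻¹ • 𝓕 f (c⁻¹ • x) from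
      funext (fourier_comp_smul f hc), iteratedFDeriv_const_smul_apply' hscaled.contDiffAt,
      iteratedFDeriv_comp_const_smul _ (hf.of_le (mod_cast le_top))]
  have hnorm : c + ‖x‖ = c * (1 + ‖c⁻¹ • x‖) := by
    rw [norm_smul, norm_inv, Real.norm_of_nonneg hc.le]
    field_simp
  rw [hderiv, norm_smul, norm_smul, le_div_iff₀ (by positivity), hnorm]
  calc ‖(c ^ d)⁻¹‖ * (‖c⁻¹ ^ k‖ * ‖iteratedFDeriv ℝ k (𝓕 f) (c⁻¹ • x)‖) *
        (c * (1 + ‖c⁻¹ • x‖)) ^ (d + k + n)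
      = c ^ n * ((1 + ‖c⁻¹ • x‖) ^ (d + k + n) * ‖iteratedFDeriv ℝ k (𝓕 f) (c⁻¹ • x)‖) := by
        rw [Real.norm_of_nonneg (by positivity), Real.norm_of_nonneg (by positivity), mul_pow]
        rw [inv_pow]
        field_simp
        ring
    _ ≤ c ^ n * K := by gcongr; exact hK _
    _ = K * c ^ n := mul_comm _ _

end FourierDecay

section GaussianKernel

set_option maxSynthPendingDepth 3

variable {V : Type*} [NormedAddCommGroup V] [InnerProductSpace ℝ V]

lemma IsElliptic.smul {l u r : ℝ} {A : V →L[ℝ] V →L[ℝ] ℝ} (hr : 0 ≤ r) (hA : IsElliptic l u A) :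
    IsElliptic (r * l) (r * u) (r • A) where
  le_apply v := by
    simpa [mul_assoc] using mul_le_mul_of_nonneg_left (hA.le_apply v) hr
  norm_le := by
    rw [norm_smul, Real.norm_of_nonneg hr]
    gcongr
    exact hA.norm_le

lemma IsElliptic.add {l l' u u' : ℝ} {A B : V →L[ℝ] V →L[ℝ] ℝ} (hA : IsElliptic l u A)
    (hB : IsElliptic l' u' B) : IsElliptic (l + l') (u + u') (A + B) where
  le_apply v := by
    simpa [add_mul] using add_le_add (hA.le_apply v) (hB.le_apply v)
  norm_le := (norm_add_le A B).trans (add_le_add hA.norm_le hB.norm_le)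

lemma IsElliptic.inv_sq_smul {l u c : ℝ} {A : V →L[ℝ] V →L[ℝ] ℝ} (hc : 0 < c)
    (hA : IsElliptic (c ^ 2 * l) (c ^ 2 * u) A) : IsElliptic l u ((c ^ 2)⁻¹ • A) := by
  have hsq : c ^ 2 ≠ 0 := by positivity
  rw [← inv_mul_cancel_left₀ hsq l, ← inv_mul_cancel_left₀ hsq u]
  exact hA.smul (by positivity)

lemma sqrt_norm_inv_sq_smul {c : ℝ} (hc : 0 < c) (B : V →L[ℝ] V →L[ℝ] ℝ) :
    √‖(c ^ 2)⁻¹ • B‖ = √‖B‖ / c := by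
  rw [norm_smul, norm_inv, norm_pow, Real.norm_of_nonneg hc.le, inv_mul_eq_div,
    Real.sqrt_div (norm_nonneg B), Real.sqrt_sq hc.le]

lemma gaussianSymbol_sq_smul (c : ℝ) (A : V →L[ℝ] V →L[ℝ] ℝ) :
    gaussianSymbol (c ^ 2 • A) = fun v => gaussianSymbol A (c • v) := by
  ext v
  simp [gaussianSymbol, sq, mul_assoc]

variable [FiniteDimensional ℝ V] [MeasurableSpace V] [BorelSpace V]

/-- The Fourier transform of `exp (-A(v, v))`. With `A = 4π²(s - t)a` this is the fundamental
solution of `∂ₜ + a D²`. -/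
def gaussianKernel (A : V →L[ℝ] V →L[ℝ] ℝ) : V → ℂ :=
  𝓕 (gaussianSymbol A)

variable {A B : V →L[ℝ] V →L[ℝ] ℝ} {l u : ℝ}

lemma IsElliptic.contDiff_gaussianKernel (hl : 0 < l) (hA : IsElliptic l u A) :
    ContDiff ℝ ∞ (gaussianKernel A) :=
  (hA.hasGaussianDecay 0).contDiff_fourier hl

lemma IsElliptic.integrable_gaussianSymbol (hl : 0 < l) (hA : IsElliptic l u A) :
    Integrable (gaussianSymbol A) :=
  (integrable_exp_neg_mul_sq_norm hl).mono'
    (contDiff_gaussianSymbol A).continuous.aestronglyMeasurable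
    (.of_forall hA.norm_gaussianSymbol_le)

lemma exists_norm_iteratedFDeriv_gaussianKernel_le (k n : ℕ) (hl : 0 < l) (u : ℝ) :
    ∃ C : ℝ, 0 ≤ C ∧ ∀ {c : ℝ}, 0 < c → ∀ {A : V →L[ℝ] V →L[ℝ] ℝ},
      IsElliptic (c ^ 2 * l) (c ^ 2 * u) A → ∀ x,
      ‖iteratedFDeriv ℝ k (gaussianKernel A) x‖ ≤
        C * c ^ n / (c + ‖x‖) ^ (Module.finrank ℝ V + k + n) := by
  obtain ⟨C, hC, h⟩ := exists_one_add_norm_pow_mul_iteratedFDeriv_fourier_le (V := V) k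
    (Module.finrank ℝ V + k + n) (Module.finrank ℝ V + k + n) hl
  refine ⟨C * |(Module.finrank ℝ V + k + n).factorial * (1 + 2 * u) ^
    (Module.finrank ℝ V + k + n)|, by positivity, fun {c} hc {A} hA x => ?_⟩
  have hdecay := (hA.inv_sq_smul hc).hasGaussianDecay (Module.finrank ℝ V + k + n)
  have hscale : gaussianKernel A = 𝓕 fun v => gaussianSymbol ((c ^ 2)⁻¹ • A) (c • v) := by
    rw [← gaussianSymbol_sq_smul, smul_inv_smul₀ (by positivity), gaussianKernel]
  rw [hscale]
  exact norm_iteratedFDeriv_fourier_comp_smul_le (hdecay.contDiff_fourier hl)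
    (fun x => (h hdecay x).trans (by gcongr; exact le_abs_self _)) hc x

lemma fourier_gaussianSymbol_sub {l' u' : ℝ} (hl : 0 < l) (hl' : 0 < l') (hA : IsElliptic l u A)
    (hB : IsElliptic l' u' B) :
    𝓕 (gaussianSymbol A - gaussianSymbol B) = gaussianKernel A - gaussianKernel B := by
  ext x
  simp only [gaussianKernel, Pi.sub_apply, Real.fourier_eq, smul_sub]
  exact integral_sub
    ((Real.fourierIntegral_convergent_iff x).mpr (hA.integrable_gaussianSymbol hl))
    ((Real.fourierIntegral_convergent_iff x).mpr (hB.integrable_gaussianSymbol hl'))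

lemma exists_norm_iteratedFDeriv_gaussianKernel_sub_le (k : ℕ) (hl : 0 < l) (u : ℝ) :
    ∃ C : ℝ, 0 ≤ C ∧ ∀ {c : ℝ}, 0 < c → ∀ {A B : V →L[ℝ] V →L[ℝ] ℝ},
      IsElliptic (c ^ 2 * l) (c ^ 2 * u) A → IsElliptic 0 (c ^ 2 * u) B → ∀ x,
      ‖iteratedFDeriv ℝ k (gaussianKernel A) x - iteratedFDeriv ℝ k (gaussianKernel (A + B)) x‖ ≤
        C * √‖B‖ / (c + ‖x‖) ^ (Module.finrank ℝ V + k + 1) := by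
  set n := Module.finrank ℝ V + k + 1
  obtain ⟨C, hC, h⟩ := exists_one_add_norm_pow_mul_iteratedFDeriv_fourier_le (V := V) k n
    (n + (n + 1)) hl
  set K : ℝ := 2 ^ n * (n.factorial * (1 + 2 * u) ^ n * (n.factorial * (2 * (1 + u) ^ 2) ^ n))
  refine ⟨C * |K|, by positivity, fun {c} hc {A B} hA hB x => ?_⟩
  have hB' : IsElliptic 0 u ((c ^ 2)⁻¹ • B) := IsElliptic.inv_sq_smul hc (by rwa [mul_zero])
  have hdecay := hasGaussianDecay_gaussianSymbol_sub (hA.inv_sq_smul hc) hB' n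
  set f := fun v => gaussianSymbol ((c ^ 2)⁻¹ • A) v -
    gaussianSymbol ((c ^ 2)⁻¹ • A + (c ^ 2)⁻¹ • B) v with hf
  have hcl : 0 < c ^ 2 * l := by positivity
  have hAB := hA.add hB
  rw [add_zero] at hAB
  have hscale : (𝓕 fun v => f (c • v)) = gaussianKernel A - gaussianKernel (A + B) := by
    rw [← fourier_gaussianSymbol_sub hcl hcl hA hAB]
    congr 1
    ext v
    have hsq : c ^ 2 ≠ 0 := by positivity
    simp only [hf, Pi.sub_apply]
    rw [← smul_add, ← congrFun (gaussianSymbol_sq_smul c _) v,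
      ← congrFun (gaussianSymbol_sq_smul c _) v, smul_inv_smul₀ hsq, smul_inv_smul₀ hsq]
  have hbound : ∀ x, (1 + ‖x‖) ^ n * ‖iteratedFDeriv ℝ k (𝓕 f) x‖ ≤ C * |K| * √‖B‖ / c := by
    refine fun x => (h hdecay x).trans ?_
    calc _ = C * K * (√‖B‖ / c) := by rw [sqrt_norm_inv_sq_smul hc]; ring
      _ ≤ C * |K| * (√‖B‖ / c) := by gcongr; exact le_abs_self K
      _ = _ := by ring
  have hfinal := norm_iteratedFDeriv_fourier_comp_smul_le (hdecay.contDiff_fourier hl) hbound hc x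
  rw [hscale, iteratedFDeriv_sub_apply
    ((hA.contDiff_gaussianKernel hcl).contDiffAt.of_le (mod_cast le_top))
    ((hAB.contDiff_gaussianKernel hcl).contDiffAt.of_le (mod_cast le_top))] at hfinal
  simpa [div_mul_cancel₀ _ hc.ne'] using hfinal

end GaussianKernel

section HeatForm

set_option maxSynthPendingDepth 3

variable {V : Type*} [NormedAddCommGroup V] [InnerProductSpace ℝ V]
  {a : ℝ → V →L[ℝ] V →L[ℝ] ℝ}

/-- The form `4π² ∫ₜˢ a`, whose `gaussianSymbol` is the Fourier multiplier propagating solutions of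
`∂ₜu + a D²u = 0` from time `s` back to time `t`. -/
def heatForm (a : ℝ → V →L[ℝ] V →L[ℝ] ℝ) (t s : ℝ) : V →L[ℝ] V →L[ℝ] ℝ :=
  (4 * Real.pi ^ 2) • ∫ r in t..s, a r

lemma heatForm_add (hinteg : ∀ t s, IntervalIntegrable a volume t s) (r t s : ℝ) :
    heatForm a t s + heatForm a r t = heatForm a r s := by
  rw [heatForm, heatForm, heatForm, ← smul_add, add_comm,
    intervalIntegral.integral_add_adjacent_intervals (hinteg r t) (hinteg t s)]

lemma continuous_heatForm (hinteg : ∀ t s, IntervalIntegrable a volume t s) :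
    Continuous fun p : ℝ × ℝ => heatForm a p.1 p.2 := by
  have hprim := intervalIntegral.continuous_primitive (μ := volume) hinteg 0
  have hsplit : (fun p : ℝ × ℝ => heatForm a p.1 p.2) = fun p =>
      (4 * Real.pi ^ 2) • ((∫ r in (0 : ℝ)..p.2, a r) - ∫ r in (0 : ℝ)..p.1, a r) := by
    ext1 p
    rw [heatForm, intervalIntegral.integral_interval_sub_left (hinteg 0 p.2) (hinteg 0 p.1)]
  rw [hsplit]
  exact ((hprim.comp continuous_snd).sub (hprim.comp continuous_fst)).const_smul
    (4 * Real.pi ^ 2)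

/-- Evaluation of a bilinear form at a pair of vectors, as a continuous functional. -/
def evalForm (v w : V) : (V →L[ℝ] V →L[ℝ] ℝ) →L[ℝ] ℝ :=
  (ContinuousLinearMap.apply ℝ ℝ w).comp (ContinuousLinearMap.apply ℝ (V →L[ℝ] ℝ) v)

lemma intervalIntegrable_apply_apply {t s : ℝ} (hinteg : IntervalIntegrable a volume t s)
    (v w : V) : IntervalIntegrable (fun r => a r v w) volume t s :=
  ⟨(evalForm v w).integrable_comp hinteg.1, (evalForm v w).integrable_comp hinteg.2⟩

lemma heatForm_apply_apply {t s : ℝ} (hinteg : IntervalIntegrable a volume t s) (v w : V) :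
    heatForm a t s v w = 4 * Real.pi ^ 2 * ∫ r in t..s, a r v w := by
  have hcomm := (evalForm v w).intervalIntegral_comp_comm hinteg
  rw [heatForm, smul_apply, smul_apply, smul_eq_mul]
  exact congrArg _ hcomm.symm

/-- Time dependent coefficients which are elliptic uniformly in time. -/
structure IsEllipticFamily (l u : ℝ) (a : ℝ → V →L[ℝ] V →L[ℝ] ℝ) : Prop where
  intervalIntegrable : ∀ t s, IntervalIntegrable a volume t s
  isElliptic : ∀ t, IsElliptic l u (a t)

lemma IsEllipticFamily.isElliptic_heatForm {l u : ℝ} (ha : IsEllipticFamily l u a) {t s : ℝ}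
    (hts : t ≤ s) :
    IsElliptic ((s - t) * (4 * Real.pi ^ 2 * l)) ((s - t) * (4 * Real.pi ^ 2 * u))
      (heatForm a t s) where
  le_apply v := by
    have hmono : ∫ _ in t..s, l * ‖v‖ ^ 2 ≤ ∫ r in t..s, a r v v :=
      intervalIntegral.integral_mono_on hts (by simp)
        (intervalIntegrable_apply_apply (ha.intervalIntegrable t s) v v)
        fun r _ => (ha.isElliptic r).le_apply v
    rw [intervalIntegral.integral_const, smul_eq_mul] at hmono
    rw [heatForm_apply_apply (ha.intervalIntegrable t s)]
    calc _ = 4 * Real.pi ^ 2 * ((s - t) * (l * ‖v‖ ^ 2)) := by ring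
      _ ≤ _ := by gcongr
  norm_le := by
    have hnorm : ‖∫ r in t..s, a r‖ ≤ u * |s - t| :=
      intervalIntegral.norm_integral_le_of_norm_le_const fun r _ => (ha.isElliptic r).norm_le
    rw [abs_of_nonneg (sub_nonneg.mpr hts)] at hnorm
    rw [heatForm, norm_smul, Real.norm_of_nonneg (by positivity)]
    calc _ ≤ 4 * Real.pi ^ 2 * (u * (s - t)) := by gcongr
      _ = _ := by ring

end HeatForm

section ParabolicDistance

variable {V : Type*} [SeminormedAddCommGroup V]

lemma norm_add_sqrt_abs_pos {s : ℝ} (hs : 0 < s) (y : V) : 0 < ‖y‖ + √|s| := by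
  have : 0 < √|s| := Real.sqrt_pos.mpr (abs_pos.mpr hs.ne')
  positivity

lemma parabolic_dist_le {R t s ε : ℝ} {x y : V} (ht : t ∈ Ioo 0 (R ^ 2)) (hx : x ∈ ball 0 R)
    (hts : t < s) (hε : 0 < ε) (hw : (s, y) ∉ Ioo 0 ((2 * R) ^ 2) ×ˢ ball (0 : V) (2 * R)) :
    ‖y‖ + √|s| ≤ 3 * (√(s - (t - ε)) + ‖x - y‖) := by
  have hR : 0 < R := pos_of_mem_ball hx
  rw [mem_ball_zero_iff] at hx
  have hs : 0 < s := ht.1.trans hts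
  have hy : ‖y‖ ≤ ‖x - y‖ + R := by
    have := norm_le_norm_add_norm_sub x y
    linarith
  have hsqrt : √|s| ≤ √(s - (t - ε)) + R := by
    rw [abs_of_pos hs, Real.sqrt_le_left (by positivity)]
    nlinarith [Real.sq_sqrt (show 0 ≤ s - (t - ε) by linarith), ht.2,
      Real.sqrt_nonneg (s - (t - ε))]
  have hfar : R ≤ √(s - (t - ε)) + ‖x - y‖ := by
    by_cases hys : ‖y‖ < 2 * R
    · have hslarge : (2 * R) ^ 2 ≤ s := by
        by_contra! hlt
        exact hw ⟨⟨hs, hlt⟩, mem_ball_zero_iff.mpr hys⟩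
      have : R ≤ √(s - (t - ε)) := Real.le_sqrt_of_sq_le (by nlinarith [ht.2])
      linarith [norm_nonneg (x - y)]
    · linarith [Real.sqrt_nonneg (s - (t - ε))]
  linarith

end ParabolicDistance

section ParabolicKernel

variable {V : Type*} [NormedAddCommGroup V] [InnerProductSpace ℝ V] [FiniteDimensional ℝ V]
  [MeasurableSpace V] [BorelSpace V] {a : ℝ → V →L[ℝ] V →L[ℝ] ℝ} {l u : ℝ}

lemma IsEllipticFamily.contDiff_gaussianKernel (hl : 0 < l) (ha : IsEllipticFamily l u a)
    {t s : ℝ} (hts : t < s) : ContDiff ℝ ∞ (gaussianKernel (heatForm a t s)) := by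
  have hlow : 0 < (s - t) * (4 * Real.pi ^ 2 * l) := by
    have := sub_pos.mpr hts
    positivity
  exact (ha.isElliptic_heatForm hts.le).contDiff_gaussianKernel hlow

lemma exists_norm_iteratedFDeriv_heatKernel_le (k n : ℕ) (hl : 0 < l) (u : ℝ) :
    ∃ C : ℝ, 0 ≤ C ∧ ∀ {a : ℝ → V →L[ℝ] V →L[ℝ] ℝ}, IsEllipticFamily l u a →
      ∀ {t s : ℝ}, t < s → ∀ x,
      ‖iteratedFDeriv ℝ k (gaussianKernel (heatForm a t s)) x‖ ≤
        C * √(s - t) ^ n / (√(s - t) + ‖x‖) ^ (Module.finrank ℝ V + k + n) := by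
  obtain ⟨C, hC, h⟩ := exists_norm_iteratedFDeriv_gaussianKernel_le (V := V) k n
    (l := 4 * Real.pi ^ 2 * l) (by positivity) (4 * Real.pi ^ 2 * u)
  refine ⟨C, hC, fun {a} ha {t s} hts x => h (Real.sqrt_pos.mpr (sub_pos.mpr hts)) ?_ x⟩
  rw [Real.sq_sqrt (sub_nonneg.mpr hts.le)]
  exact ha.isElliptic_heatForm hts.le

lemma exists_norm_heatKernel_sub_le_of_space (hl : 0 < l) (u : ℝ) :
    ∃ C : ℝ, 0 ≤ C ∧ ∀ {a : ℝ → V →L[ℝ] V →L[ℝ] ℝ}, IsEllipticFamily l u a →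
      ∀ {t s : ℝ}, t < s → ∀ {S : Set V}, Convex ℝ S → ∀ {m : ℝ}, 0 < m →
      (∀ x ∈ S, m ≤ √(s - t) + ‖x‖) → ∀ x ∈ S, ∀ x' ∈ S,
      ‖iteratedFDeriv ℝ 2 (gaussianKernel (heatForm a t s)) x -
        iteratedFDeriv ℝ 2 (gaussianKernel (heatForm a t s)) x'‖ ≤
        C * ‖x - x'‖ / m ^ (Module.finrank ℝ V + 3) := by
  obtain ⟨C, hC, h⟩ := exists_norm_iteratedFDeriv_heatKernel_le (V := V) 3 0 hl u
  refine ⟨C, hC, fun {a} ha {t s} hts {S} hS {m} hm hSm x hx x' hx' => ?_⟩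
  have hdiff := (ha.contDiff_gaussianKernel hl hts).differentiable_iteratedFDeriv (m := 2)
    (WithTop.coe_lt_coe.mpr (ENat.natCast_lt_top 2))
  have hderiv : ∀ y ∈ S, ‖fderiv ℝ (iteratedFDeriv ℝ 2 (gaussianKernel (heatForm a t s))) y‖ ≤
      C / m ^ (Module.finrank ℝ V + 3) := by
    intro y hy
    rw [norm_fderiv_iteratedFDeriv]
    calc _ ≤ C * √(s - t) ^ 0 / (√(s - t) + ‖y‖) ^ (Module.finrank ℝ V + 3 + 0) := h ha hts y
      _ ≤ _ := by
        rw [pow_zero, mul_one, add_zero]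
        gcongr
        exact hSm y hy
  calc _ ≤ C / m ^ (Module.finrank ℝ V + 3) * ‖x - x'‖ :=
        hS.norm_image_sub_le_of_norm_fderiv_le (fun y _ => hdiff y) hderiv hx' hx
    _ = _ := by ring

lemma exists_norm_heatKernel_sub_le_of_time (hl : 0 < l) (u : ℝ) :
    ∃ C : ℝ, 0 ≤ C ∧ ∀ {a : ℝ → V →L[ℝ] V →L[ℝ] ℝ}, IsEllipticFamily l u a →
      ∀ {t t' s : ℝ}, t ≤ t' → t' < s → t' - t ≤ s - t' → ∀ x,
      ‖iteratedFDeriv ℝ 2 (gaussianKernel (heatForm a t' s)) x -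
        iteratedFDeriv ℝ 2 (gaussianKernel (heatForm a t s)) x‖ ≤
        C * √(t' - t) / (√(s - t') + ‖x‖) ^ (Module.finrank ℝ V + 3) := by
  obtain ⟨C, hC, h⟩ := exists_norm_iteratedFDeriv_gaussianKernel_sub_le (V := V) 2
    (l := 4 * Real.pi ^ 2 * l) (by positivity) (4 * Real.pi ^ 2 * u)
  refine ⟨C * √(4 * Real.pi ^ 2 * u), by positivity, fun {a} ha {t t' s} htt' hts hle x => ?_⟩
  have hA := ha.isElliptic_heatForm hts.le
  have hB := ha.isElliptic_heatForm htt'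
  have hu : 0 ≤ 4 * Real.pi ^ 2 * u :=
    mul_nonneg (by positivity) ((norm_nonneg (a 0)).trans (ha.isElliptic 0).norm_le)
  have hsq : √(s - t') ^ 2 = s - t' := Real.sq_sqrt (sub_nonneg.mpr hts.le)
  have hB' : IsElliptic 0 (√(s - t') ^ 2 * (4 * Real.pi ^ 2 * u)) (heatForm a t t') := by
    refine ⟨fun v => le_trans ?_ (hB.le_apply v), hB.norm_le.trans ?_⟩
    · have := sub_nonneg.mpr htt'
      rw [zero_mul]
      positivity
    · rw [hsq]
      gcongr
  have hsub := h (Real.sqrt_pos.mpr (sub_pos.mpr hts)) (by rwa [hsq]) hB' x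
  rw [heatForm_add ha.intervalIntegrable] at hsub
  refine hsub.trans ?_
  have hnorm : √‖heatForm a t t'‖ ≤ √(4 * Real.pi ^ 2 * u) * √(t' - t) := by
    rw [← Real.sqrt_mul hu, mul_comm]
    exact Real.sqrt_le_sqrt hB.norm_le
  rw [mul_assoc]
  gcongr

/-- The Hessian in `x` of the fundamental solution with pole `w`, evaluated at `z`. Evaluating it at
time `z.1 - ε` instead of `z.1` removes the singularity without affecting the structure. -/
def parabolicKernel (a : ℝ → V →L[ℝ] V →L[ℝ] ℝ) (ε : ℝ) (z w : ℝ × V) : V [×2]→L[ℝ] ℂ :=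
  if z.1 < w.1 then iteratedFDeriv ℝ 2 (gaussianKernel (heatForm a (z.1 - ε) w.1)) (z.2 - w.2)
  else 0

lemma parabolicKernel_of_le (a : ℝ → V →L[ℝ] V →L[ℝ] ℝ) (ε : ℝ) {z w : ℝ × V} (h : w.1 ≤ z.1) :
    parabolicKernel a ε z w = 0 :=
  if_neg h.not_gt

lemma exists_norm_parabolicKernel_le (hl : 0 < l) (u : ℝ) :
    ∃ C : ℝ, 0 ≤ C ∧ ∀ {a : ℝ → V →L[ℝ] V →L[ℝ] ℝ}, IsEllipticFamily l u a →
      ∀ {ε R : ℝ}, 0 < ε → ε ≤ R ^ 2 → ∀ {z : ℝ × V}, z ∈ Ioo 0 (R ^ 2) ×ˢ ball 0 R →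
      ∀ {w : ℝ × V}, w ∉ Ioo 0 ((2 * R) ^ 2) ×ˢ ball 0 (2 * R) → w.1 ≤ z.1 + 2 * R ^ 2 →
      ‖parabolicKernel a ε z w‖ ≤ C * R / (‖w.2‖ + √|w.1|) ^ (Module.finrank ℝ V + 3) := by
  obtain ⟨C, hC, h⟩ := exists_norm_iteratedFDeriv_heatKernel_le (V := V) 2 1 hl u
  refine ⟨C * 2 * 3 ^ (Module.finrank ℝ V + 3), by positivity,
    fun {a} ha {ε R} hε hεR {z} hz {w} hw hwz => ?_⟩
  have hR : 0 < R := pos_of_mem_ball hz.2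
  rw [parabolicKernel]
  split_ifs with hzw
  · have hdist := parabolic_dist_le hz.1 hz.2 hzw hε hw
    have hw_pos := norm_add_sqrt_abs_pos (hz.1.1.trans hzw) w.2
    have hsqrt : √(w.1 - (z.1 - ε)) ≤ 2 * R := by
      rw [Real.sqrt_le_left (by positivity)]
      nlinarith
    calc _ ≤ C * √(w.1 - (z.1 - ε)) ^ 1 /
          (√(w.1 - (z.1 - ε)) + ‖z.2 - w.2‖) ^ (Module.finrank ℝ V + 2 + 1) :=
          h ha (by linarith) _
      _ ≤ C * (2 * R) / ((‖w.2‖ + √|w.1|) / 3) ^ (Module.finrank ℝ V + 3) := by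
          rw [pow_one]
          gcongr
          linarith
      _ = _ := by rw [div_pow, div_div_eq_mul_div]; ring
  · rw [norm_zero]
    positivity

lemma exists_norm_parabolicKernel_sub_le_of_space (hl : 0 < l) (u : ℝ) :
    ∃ C : ℝ, 0 ≤ C ∧ ∀ {a : ℝ → V →L[ℝ] V →L[ℝ] ℝ}, IsEllipticFamily l u a →
      ∀ {ε R : ℝ}, 0 < ε → ∀ {t : ℝ}, t ∈ Ioo 0 (R ^ 2) → ∀ {x x' : V}, x ∈ ball 0 R →
      x' ∈ ball 0 R → ∀ {w : ℝ × V}, w ∉ Ioo 0 ((2 * R) ^ 2) ×ˢ ball 0 (2 * R) →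
      ‖parabolicKernel a ε (t, x) w - parabolicKernel a ε (t, x') w‖ ≤
        C * R / (‖w.2‖ + √|w.1|) ^ (Module.finrank ℝ V + 3) := by
  obtain ⟨C, hC, h⟩ := exists_norm_heatKernel_sub_le_of_space (V := V) hl u
  refine ⟨C * 2 * 3 ^ (Module.finrank ℝ V + 3), by positivity,
    fun {a} ha {ε R} hε {t} ht {x x'} hx hx' {w} hw => ?_⟩
  have hR : 0 < R := pos_of_mem_ball hx
  simp only [parabolicKernel]
  split_ifs with htw
  · have hw_pos := norm_add_sqrt_abs_pos (ht.1.trans htw) w.2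
    have hball : ∀ y ∈ ball (-w.2) R, (‖w.2‖ + √|w.1|) / 3 ≤ √(w.1 - (t - ε)) + ‖y‖ := by
      intro y hy
      have := parabolic_dist_le (x := y + w.2) ht (by simpa [dist_eq_norm] using hy) htw hε hw
      rw [add_sub_cancel_right] at this
      linarith
    have hshift : ∀ {y : V}, y ∈ ball 0 R → y - w.2 ∈ ball (-w.2) R := by
      simp [dist_eq_norm]
    have hdiam : ‖(x - w.2) - (x' - w.2)‖ ≤ 2 * R := by
      rw [mem_ball_zero_iff] at hx hx'
      rw [sub_sub_sub_cancel_right]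
      linarith [norm_sub_le x x']
    calc _ ≤ C * ‖(x - w.2) - (x' - w.2)‖ /
          ((‖w.2‖ + √|w.1|) / 3) ^ (Module.finrank ℝ V + 3) :=
          h ha (by linarith) (convex_ball _ _) (by positivity) hball _ (hshift hx) _ (hshift hx')
      _ ≤ C * (2 * R) / ((‖w.2‖ + √|w.1|) / 3) ^ (Module.finrank ℝ V + 3) := by gcongr
      _ = _ := by rw [div_pow, div_div_eq_mul_div]; ring
  · rw [sub_self, norm_zero]
    positivity

lemma exists_norm_parabolicKernel_sub_le_of_time (hl : 0 < l) (u : ℝ) :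
    ∃ C : ℝ, 0 ≤ C ∧ ∀ {a : ℝ → V →L[ℝ] V →L[ℝ] ℝ}, IsEllipticFamily l u a →
      ∀ {ε R : ℝ}, 0 < ε → ε ≤ R ^ 2 → ∀ {t t' : ℝ}, t ∈ Ioo 0 (R ^ 2) → t' ∈ Ioo 0 (R ^ 2) →
      t ≤ t' → ∀ {x : V}, x ∈ ball 0 R → ∀ {w : ℝ × V},
      w ∉ Ioo 0 ((2 * R) ^ 2) ×ˢ ball 0 (2 * R) →
      ‖parabolicKernel a ε (t', x) w - parabolicKernel a ε (t, x) w‖ ≤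
        C * R / (‖w.2‖ + √|w.1|) ^ (Module.finrank ℝ V + 3) := by
  obtain ⟨C₁, hC₁, hsize⟩ := exists_norm_parabolicKernel_le (V := V) hl u
  obtain ⟨C₂, hC₂, htime⟩ := exists_norm_heatKernel_sub_le_of_time (V := V) hl u
  refine ⟨2 * C₁ + C₂ * 3 ^ (Module.finrank ℝ V + 3), by positivity,
    fun {a} ha {ε R} hε hεR {t t'} ht ht' htt' {x} hx {w} hw => ?_⟩
  have hR : 0 < R := pos_of_mem_ball hx
  set P := (‖w.2‖ + √|w.1|) ^ (Module.finrank ℝ V + 3)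
  by_cases hnear : w.1 ≤ t' + R ^ 2
  · calc _ ≤ ‖parabolicKernel a ε (t', x) w‖ + ‖parabolicKernel a ε (t, x) w‖ := norm_sub_le _ _
      _ ≤ C₁ * R / P + C₁ * R / P :=
          add_le_add (hsize ha hε hεR ⟨ht', hx⟩ hw (by dsimp only; nlinarith))
            (hsize ha hε hεR ⟨ht, hx⟩ hw (by dsimp only; nlinarith [ht.1, ht'.2]))
      _ = 2 * C₁ * R / P := by ring
      _ ≤ _ := by
          gcongr
          exact le_add_of_nonneg_right (by positivity)
  · rw [not_le] at hnear
    have ht'w : t' < w.1 := by nlinarith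
    have hdist := parabolic_dist_le ht' hx ht'w hε hw
    have hw_pos := norm_add_sqrt_abs_pos (ht'.1.trans ht'w) w.2
    have hsqrt : √(t' - ε - (t - ε)) ≤ R :=
      Real.sqrt_le_iff.mpr ⟨hR.le, by linarith [ht.1, ht'.2]⟩
    simp only [parabolicKernel, if_pos ht'w, if_pos (htt'.trans_lt ht'w)]
    calc _ ≤ C₂ * √(t' - ε - (t - ε)) /
          (√(w.1 - (t' - ε)) + ‖x - w.2‖) ^ (Module.finrank ℝ V + 3) :=
          htime ha (by linarith) (by linarith) (by linarith [ht.1, ht'.2]) _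
      _ ≤ C₂ * R / ((‖w.2‖ + √|w.1|) / 3) ^ (Module.finrank ℝ V + 3) := by
          gcongr
          linarith
      _ = C₂ * 3 ^ (Module.finrank ℝ V + 3) * R / P := by rw [div_pow, div_div_eq_mul_div]; ring
      _ ≤ _ := by
          gcongr
          exact le_add_of_nonneg_left (by positivity)

lemma exists_norm_parabolicKernel_sub_le (hl : 0 < l) (u : ℝ) :
    ∃ C : ℝ, 0 ≤ C ∧ ∀ {a : ℝ → V →L[ℝ] V →L[ℝ] ℝ}, IsEllipticFamily l u a →
      ∀ {ε R : ℝ}, 0 < ε → ε ≤ R ^ 2 → ∀ {z z' : ℝ × V}, z ∈ Ioo 0 (R ^ 2) ×ˢ ball 0 R →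
      z' ∈ Ioo 0 (R ^ 2) ×ˢ ball 0 R → ∀ {w : ℝ × V},
      w ∉ Ioo 0 ((2 * R) ^ 2) ×ˢ ball 0 (2 * R) →
      ‖parabolicKernel a ε z w - parabolicKernel a ε z' w‖ ≤
        C * R / (‖w.2‖ + √|w.1|) ^ (Module.finrank ℝ V + 3) := by
  obtain ⟨C₁, hC₁, hspace⟩ := exists_norm_parabolicKernel_sub_le_of_space (V := V) hl u
  obtain ⟨C₂, hC₂, htime⟩ := exists_norm_parabolicKernel_sub_le_of_time (V := V) hl u
  refine ⟨C₁ + C₂, by positivity,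
    fun {a} ha {ε R} hε hεR {z z'} ⟨ht, hx⟩ ⟨ht', hx'⟩ {w} hw => ?_⟩
  have htime' : ‖parabolicKernel a ε (z.1, z'.2) w - parabolicKernel a ε (z'.1, z'.2) w‖ ≤
      C₂ * R / (‖w.2‖ + √|w.1|) ^ (Module.finrank ℝ V + 3) := by
    rcases le_total z.1 z'.1 with h | h
    · rw [norm_sub_rev]
      exact htime ha hε hεR ht ht' h hx' hw
    · exact htime ha hε hεR ht' ht h hx' hw
  calc _ ≤ _ := norm_sub_le_norm_sub_add_norm_sub _ (parabolicKernel a ε (z.1, z'.2) w) _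
    _ ≤ _ := add_le_add (hspace ha hε ht hx hx' hw) htime'
    _ = _ := by ring

end ParabolicKernel

section Plancherel

open scoped SchwartzMap

variable {V : Type*} [NormedAddCommGroup V] [InnerProductSpace ℝ V] [FiniteDimensional ℝ V]
  [MeasurableSpace V] [BorelSpace V] {F : V → ℂ}

lemma continuous_fourier (hF : Integrable F) : Continuous (𝓕 F) :=
  VectorFourier.fourierIntegral_continuous Real.continuous_fourierChar
    (by exact continuous_inner) hF

lemma integral_schwartz_smul_fourier (g : 𝓢(V, ℂ)) (hF : Integrable F) :
    ∫ v, g v • 𝓕 F v = ∫ v, (𝓕 g) v • F v := by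
  simpa [SchwartzMap.fourier_coe] using!
    (VectorFourier.integral_fourierIntegral_smul_eq_flip (L := innerₗ V)
      Real.continuous_fourierChar continuous_inner g.integrable hF).symm

lemma fourier_ae_eq_fourier_toLp (hF : Integrable F) (hF2 : MemLp F 2) :
    𝓕 F =ᵐ[volume] (𝓕 (hF2.toLp F) : Lp ℂ 2) := by
  refine ae_eq_of_integral_contDiff_smul_eq (continuous_fourier hF).locallyIntegrable
    ((Lp.memLp (𝓕 (hF2.toLp F))).locallyIntegrable one_le_two) fun φ hφ hφc => ?_
  have hψc : HasCompactSupport (Complex.ofRealCLM ∘ φ) := hφc.comp_left (map_zero _)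
  set ψ : 𝓢(V, ℂ) := hψc.toSchwartzMap (Complex.ofRealCLM.contDiff.comp hφ) with hψ
  have hcoe : ∀ v (z : ℂ), φ v • z = ψ v • z := fun v z => by simp [hψ]
  simp only [hcoe]
  have hdual : ∫ v, ψ v • (𝓕 (hF2.toLp F) : Lp ℂ 2 volume) v = ∫ v, (𝓕 ψ) v • hF2.toLp F v := by
    simpa only [TemperedDistribution.fourier_apply, Lp.toTemperedDistribution_apply] using
      (DFunLike.congr_fun (Lp.fourier_toTemperedDistribution_eq (hF2.toLp F)) ψ).symm
  rw [hdual, integral_schwartz_smul_fourier ψ hF]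
  refine integral_congr_ae ?_
  filter_upwards [hF2.coeFn_toLp] with v hv
  rw [hv]

lemma lintegral_enorm_sq_eq_eLpNorm {α : Type*} [MeasurableSpace α] {μ : Measure α}
    (f : α → ℂ) : ∫⁻ x, ‖f x‖ₑ ^ 2 ∂μ = eLpNorm f 2 μ ^ 2 := by
  have h := eLpNorm_nnreal_pow_eq_lintegral (μ := μ) (f := f) (p := 2) two_ne_zero
  simpa only [ENNReal.coe_ofNat, NNReal.coe_ofNat, ENNReal.rpow_ofNat] using h.symm

lemma lintegral_enorm_sq_fourier_le (hF : Integrable F) :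
    ∫⁻ v, ‖𝓕 F v‖ₑ ^ 2 ≤ ∫⁻ x, ‖F x‖ₑ ^ 2 := by
  rw [lintegral_enorm_sq_eq_eLpNorm, lintegral_enorm_sq_eq_eLpNorm]
  by_cases htop : eLpNorm F 2 volume = ⊤
  · simp [htop]
  have hF2 : MemLp F 2 := ⟨hF.1, Ne.lt_top htop⟩
  have hnorm : ‖𝓕 (hF2.toLp F)‖ₑ = ‖hF2.toLp F‖ₑ := by
    rw [← ofReal_norm, ← ofReal_norm, Lp.norm_fourier_eq]
  rw [Lp.enorm_def, Lp.enorm_def, eLpNorm_congr_ae hF2.coeFn_toLp] at hnorm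
  rw [eLpNorm_congr_ae (fourier_ae_eq_fourier_toLp hF hF2), hnorm]

lemma lintegral_enorm_sq_fourierInv_le (hF : Integrable F) :
    ∫⁻ v, ‖𝓕⁻ F v‖ₑ ^ 2 ≤ ∫⁻ x, ‖F x‖ₑ ^ 2 := by
  simp only [Real.fourierInv_eq_fourier_neg]
  rw [lintegral_neg_eq_self (fun v => ‖𝓕 F v‖ₑ ^ 2)]
  exact lintegral_enorm_sq_fourier_le hF

end Plancherel

section Schur

variable {α : Type*} [MeasurableSpace α] {μ : Measure α}

lemma sq_rpow_half (x : ℝ≥0∞) : (x ^ (1 / 2 : ℝ)) ^ 2 = x := by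
  rw [← ENNReal.rpow_natCast, ← ENNReal.rpow_mul]
  norm_num

lemma sq_lintegral_mul_le {f g : α → ℝ≥0∞} (hf : AEMeasurable f μ) (hg : AEMeasurable g μ) :
    (∫⁻ x, f x * g x ∂μ) ^ 2 ≤ (∫⁻ x, f x ^ 2 ∂μ) * ∫⁻ x, g x ^ 2 ∂μ := by
  have h := ENNReal.lintegral_mul_le_Lp_mul_Lq μ Real.HolderConjugate.two_two hf hg
  simp only [Pi.mul_apply, ENNReal.rpow_ofNat] at h
  calc _ ≤ ((∫⁻ x, f x ^ 2 ∂μ) ^ (1 / 2 : ℝ) * (∫⁻ x, g x ^ 2 ∂μ) ^ (1 / 2 : ℝ)) ^ 2 := by gcongr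
    _ = _ := by rw [mul_pow, sq_rpow_half, sq_rpow_half]

lemma sq_lintegral_weight_mul_le {k h : α → ℝ≥0∞} (hk : AEMeasurable k μ)
    (hh : AEMeasurable h μ) :
    (∫⁻ x, k x * h x ∂μ) ^ 2 ≤ (∫⁻ x, k x ∂μ) * ∫⁻ x, k x * h x ^ 2 ∂μ := by
  have hsplit : ∀ x, k x * h x = k x ^ (1 / 2 : ℝ) * (k x ^ (1 / 2 : ℝ) * h x) := fun x => by
    rw [← mul_assoc, ← pow_two, sq_rpow_half]
  have hcs := sq_lintegral_mul_le (hk.pow_const (1 / 2 : ℝ)) ((hk.pow_const (1 / 2 : ℝ)).mul hh)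
  simpa only [mul_pow, sq_rpow_half, hsplit, Pi.mul_apply] using hcs

lemma lintegral_sq_lintegral_conv_le {k h : ℝ → ℝ≥0∞} (hk : Measurable k) (hh : Measurable h) :
    ∫⁻ t, (∫⁻ s, k (s - t) * h s) ^ 2 ≤ (∫⁻ r, k r) ^ 2 * ∫⁻ s, h s ^ 2 := by
  have hk' : Measurable fun p : ℝ × ℝ => k (p.2 - p.1) * h p.2 ^ 2 := by fun_prop
  calc _ ≤ ∫⁻ t, (∫⁻ r, k r) * ∫⁻ s, k (s - t) * h s ^ 2 := by
        refine lintegral_mono fun t => ?_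
        have hcs := sq_lintegral_weight_mul_le (μ := volume) (k := fun s => k (s - t)) (h := h)
          (by fun_prop) hh.aemeasurable
        rwa [lintegral_sub_right_eq_self k t] at hcs
    _ = (∫⁻ r, k r) * ∫⁻ s, ∫⁻ t, k (s - t) * h s ^ 2 := by
        rw [lintegral_const_mul _ hk'.lintegral_prod_right',
          lintegral_lintegral_swap hk'.aemeasurable]
    _ = (∫⁻ r, k r) * ∫⁻ s, (∫⁻ r, k r) * h s ^ 2 := by
        congr 1
        refine lintegral_congr fun s => ?_
        rw [lintegral_mul_const _ (by fun_prop), lintegral_sub_left_eq_self k s]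
    _ = _ := by
        rw [lintegral_const_mul _ (by fun_prop), ← mul_assoc, pow_two]

lemma lintegral_indicator_exp_neg_mul_le {b c : ℝ} (hb : 0 ≤ b) (hc : 0 < c) :
    ∫⁻ r, (Ioi (0 : ℝ)).indicator (fun r => ENNReal.ofReal (b * Real.exp (-(c * b) * r))) r ≤
      ENNReal.ofReal c⁻¹ := by
  rcases hb.eq_or_lt with rfl | hb
  · simp
  have hcb : -(c * b) < 0 := neg_neg_of_pos (mul_pos hc hb)
  rw [lintegral_indicator measurableSet_Ioi, ← ofReal_integral_eq_lintegral_ofReal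
    ((integrableOn_exp_mul_Ioi hcb 0).const_mul b)
    (Filter.Eventually.of_forall fun r => by positivity), integral_const_mul,
    integral_exp_mul_Ioi hcb]
  apply le_of_eq
  congr 1
  rw [mul_zero, Real.exp_zero]
  field_simp

end Schur

section Potential

set_option maxSynthPendingDepth 3

open scoped RealInnerProductSpace

variable {V : Type*} [NormedAddCommGroup V] [InnerProductSpace ℝ V]
  {a : ℝ → V →L[ℝ] V →L[ℝ] ℝ} {e e' : V} {l u ε : ℝ}

/-- The Fourier multiplier of the second derivative in the directions `e` and `e'`. -/
def hessianSymbol (e e' v : V) : ℂ :=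
  -((4 * Real.pi ^ 2 * (⟪v, e⟫ * ⟪v, e'⟫) : ℝ) : ℂ)

lemma norm_hessianSymbol_le (he : ‖e‖ ≤ 1) (he' : ‖e'‖ ≤ 1) (v : V) :
    ‖hessianSymbol e e' v‖ ≤ 4 * Real.pi ^ 2 * ‖v‖ ^ 2 := by
  rw [hessianSymbol, norm_neg, Complex.norm_real, norm_mul,
    Real.norm_of_nonneg (by positivity), norm_mul, pow_two ‖v‖]
  gcongr
  · exact (norm_inner_le_norm (𝕜 := ℝ) v e).trans (mul_le_of_le_one_right (norm_nonneg v) he)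
  · exact (norm_inner_le_norm (𝕜 := ℝ) v e').trans (mul_le_of_le_one_right (norm_nonneg v) he')

lemma continuous_hessianSymbol (e e' : V) : Continuous (hessianSymbol e e') := by
  unfold hessianSymbol
  fun_prop

/-- The Fourier multiplier propagating from time `s` back to time `t - ε`; it vanishes unless
`t < s`. -/
def propagator (a : ℝ → V →L[ℝ] V →L[ℝ] ℝ) (ε t s : ℝ) (v : V) : ℂ :=
  if t < s then gaussianSymbol (heatForm a (t - ε) s) v else 0

lemma IsEllipticFamily.norm_gaussianSymbol_heatForm_le (ha : IsEllipticFamily l u a) {t s : ℝ}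
    (hts : t ≤ s) (v : V) :
    ‖gaussianSymbol (heatForm a t s) v‖ ≤ Real.exp (-(4 * Real.pi ^ 2 * l * (s - t)) * ‖v‖ ^ 2) :=
  ((ha.isElliptic_heatForm hts).norm_gaussianSymbol_le v).trans_eq (by ring_nf)

lemma IsEllipticFamily.norm_propagator_le (hl : 0 < l) (ha : IsEllipticFamily l u a) (hε : 0 < ε)
    (t s : ℝ) (v : V) :
    ‖propagator a ε t s v‖ ≤ Real.exp (-(4 * Real.pi ^ 2 * l * ε) * ‖v‖ ^ 2) := by
  rw [propagator]
  split_ifs with hts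
  · refine (ha.norm_gaussianSymbol_heatForm_le (by linarith) v).trans ?_
    gcongr
    linarith
  · rw [norm_zero]
    positivity

lemma IsEllipticFamily.norm_propagator_le_indicator (hl : 0 < l) (ha : IsEllipticFamily l u a)
    (hε : 0 < ε) (t s : ℝ) (v : V) :
    ‖propagator a ε t s v‖ ≤
      (Ioi (0 : ℝ)).indicator (fun r => Real.exp (-(l * (4 * Real.pi ^ 2 * ‖v‖ ^ 2)) * r))
        (s - t) := by
  rw [propagator]
  split_ifs with hts
  · rw [indicator_of_mem (mem_Ioi.mpr (sub_pos.mpr hts))]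
    refine (ha.norm_gaussianSymbol_heatForm_le (by linarith) v).trans (Real.exp_le_exp.mpr ?_)
    have : 0 ≤ l * (4 * Real.pi ^ 2 * ‖v‖ ^ 2) * ε := by positivity
    linarith
  · rw [norm_zero]
    exact indicator_nonneg (fun r _ => Real.exp_nonneg _) _

lemma continuous_gaussianSymbol_heatForm (ha : ∀ t s, IntervalIntegrable a volume t s) :
    Continuous fun p : ℝ × ℝ × V => gaussianSymbol (heatForm a p.1 p.2.1) p.2.2 := by
  have hform : Continuous fun p : ℝ × ℝ × V => heatForm a p.1 p.2.1 :=
    (continuous_heatForm ha).comp (f := fun p : ℝ × ℝ × V => (p.1, p.2.1)) (by fun_prop)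
  unfold gaussianSymbol
  fun_prop

lemma measurable_propagator [MeasurableSpace V] [BorelSpace V] [SecondCountableTopology V]
    (ha : ∀ t s, IntervalIntegrable a volume t s) (ε : ℝ) :
    Measurable fun p : ℝ × ℝ × V => propagator a ε p.1 p.2.1 p.2.2 := by
  refine Measurable.ite (measurableSet_lt measurable_fst (by fun_prop)) ?_ measurable_const
  exact (continuous_gaussianSymbol_heatForm ha).measurable.comp
    (f := fun p : ℝ × ℝ × V => (p.1 - ε, p.2.1, p.2.2)) (by fun_prop)

variable [FiniteDimensional ℝ V] [MeasurableSpace V] [BorelSpace V]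

lemma fourier_eq_fourierInv_of_even {F : V → ℂ} (hF : ∀ v, F (-v) = F v) : 𝓕 F = 𝓕⁻ F := by
  simp only [Real.fourierInv_eq_fourier_comp_neg, hF]

lemma IsElliptic.iteratedFDeriv_gaussianKernel_apply {A : V →L[ℝ] V →L[ℝ] ℝ} (hl : 0 < l)
    (hA : IsElliptic l u A) (e e' x : V) :
    iteratedFDeriv ℝ 2 (gaussianKernel A) x ![e, e'] =
      𝓕⁻ (fun v => hessianSymbol e e' v * gaussianSymbol A v) x := by
  have hinteg : ∀ n : ℕ, Integrable fun v => ‖v‖ ^ n * ‖gaussianSymbol A v‖ := fun n => by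
    simpa only [norm_iteratedFDeriv_zero] using
      (hA.hasGaussianDecay 0).integrable_pow_mul_norm_iteratedFDeriv hl n le_rfl
  have hmeas := (contDiff_gaussianSymbol A).continuous.aestronglyMeasurable (μ := volume)
  rw [gaussianKernel, Real.iteratedFDeriv_fourier (N := 2) (fun n _ => hinteg n) hmeas le_rfl,
    Real.fourier_continuousMultilinearMap_apply
      (VectorFourier.integrable_fourierPowSMulRight (innerSL ℝ) (hinteg 2) hmeas),
    ← fourier_eq_fourierInv_of_even fun v => by simp [hessianSymbol, gaussianSymbol]]
  refine congrArg (fun F : V → ℂ => 𝓕 F x) (funext fun v => ?_)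
  rw [VectorFourier.fourierPowSMulRight_apply]
  change (-(2 * Real.pi * Complex.I)) ^ 2 • (∏ i : Fin 2, ⟪v, ![e, e'] i⟫) • gaussianSymbol A v = _
  simp only [hessianSymbol, Fin.prod_univ_two, Matrix.cons_val_zero, Matrix.cons_val_one,
    smul_eq_mul, Complex.real_smul, neg_sq, mul_pow, Complex.I_sq]
  push_cast
  ring

lemma IsEllipticFamily.parabolicKernel_apply (hl : 0 < l) (ha : IsEllipticFamily l u a)
    (hε : 0 < ε) (e e' : V) (z w : ℝ × V) :
    parabolicKernel a ε z w ![e, e'] =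
      𝓕⁻ (fun v => hessianSymbol e e' v * propagator a ε z.1 w.1 v) (z.2 - w.2) := by
  unfold parabolicKernel propagator
  split_ifs with hzw
  · have hgap : 0 < w.1 - (z.1 - ε) := by linarith
    exact (ha.isElliptic_heatForm (by linarith)).iteratedFDeriv_gaussianKernel_apply
      (by positivity) e e' _
  · simp [Real.fourierInv_eq]

lemma integrable_norm_hessianSymbol_mul_exp (hl : 0 < l) (he : ‖e‖ ≤ 1) (he' : ‖e'‖ ≤ 1) :
    Integrable fun v => ‖hessianSymbol e e' v‖ * Real.exp (-l * ‖v‖ ^ 2) := by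
  have hcont := continuous_hessianSymbol e e'
  refine ((integrable_one_add_norm_pow_mul_exp (V := V) 2 hl).const_mul (4 * Real.pi ^ 2)).mono'
    (by fun_prop) (.of_forall fun v => ?_)
  rw [Real.norm_of_nonneg (by positivity), ← mul_assoc]
  gcongr
  refine (norm_hessianSymbol_le he he' v).trans ?_
  gcongr
  linarith

/-- Duhamel's formula on the Fourier side: the spatial Fourier transform at time `t` of the solution
with source `g`. -/
def duhamelSymbol (a : ℝ → V →L[ℝ] V →L[ℝ] ℝ) (ε : ℝ) (g : ℝ × V → ℂ) (t : ℝ) (v : V) : ℂ :=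
  ∫ s, propagator a ε t s v * 𝓕 (fun y => g (s, y)) v

/-- The convolution of `g` with the component `(e, e')` of the parabolic kernel. -/
def potential (a : ℝ → V →L[ℝ] V →L[ℝ] ℝ) (ε : ℝ) (e e' : V) (g : ℝ × V → ℂ) (z : ℝ × V) : ℂ :=
  ∫ w, parabolicKernel a ε z w ![e, e'] * g w

variable {g : ℝ × V → ℂ}

lemma measurable_fourier_slice (hg : Measurable g) :
    Measurable fun p : ℝ × V => 𝓕 (fun y => g (p.1, y)) p.2 := by
  have hintegrand : Measurable fun q : (ℝ × V) × V =>
      (Real.fourierChar (-⟪q.2, q.1.2⟫) : ℂ) * g (q.1.1, q.2) := by fun_prop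
  simp only [Real.fourier_eq, Circle.smul_def, smul_eq_mul]
  exact hintegrand.stronglyMeasurable.integral_prod_right'.measurable

lemma IsEllipticFamily.measurable_duhamelSymbol (ha : IsEllipticFamily l u a) (ε : ℝ)
    (hg : Measurable g) : Measurable fun p : ℝ × V => duhamelSymbol a ε g p.1 p.2 := by
  have hintegrand : Measurable fun q : (ℝ × V) × ℝ =>
      propagator a ε q.1.1 q.2 q.1.2 * 𝓕 (fun y => g (q.2, y)) q.1.2 :=
    ((measurable_propagator ha.intervalIntegrable ε).comp
      (f := fun q : (ℝ × V) × ℝ => (q.1.1, q.2, q.1.2)) (by fun_prop)).mul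
    ((measurable_fourier_slice hg).comp (f := fun q : (ℝ × V) × ℝ => (q.2, q.1.2)) (by fun_prop))
  exact hintegrand.stronglyMeasurable.integral_prod_right'.measurable

lemma IsEllipticFamily.duhamelSymbol_eq_integral (hl : 0 < l) (ha : IsEllipticFamily l u a)
    (hε : 0 < ε) (hg : Integrable g) (t : ℝ) (v : V) :
    duhamelSymbol a ε g t v =
      ∫ w : ℝ × V, propagator a ε t w.1 v * (Real.fourierChar (-⟪w.2, v⟫) • g w) := by
  have hprop : Measurable fun w : ℝ × V => propagator a ε t w.1 v :=
    (measurable_propagator ha.intervalIntegrable ε).comp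
      (f := fun w : ℝ × V => (t, w.1, v)) (by fun_prop)
  have hchar : Continuous fun w : ℝ × V => (Real.fourierChar (-⟪w.2, v⟫) : ℂ) := by fun_prop
  have hinteg : Integrable fun w : ℝ × V =>
      propagator a ε t w.1 v * (Real.fourierChar (-⟪w.2, v⟫) • g w) := by
    simp only [Circle.smul_def, smul_eq_mul]
    exact (hg.bdd_mul hchar.aestronglyMeasurable
      (.of_forall fun _ => (Circle.norm_coe _).le)).bdd_mul hprop.aestronglyMeasurable
        (.of_forall fun w => ha.norm_propagator_le hl hε t w.1 v)
  rw [Measure.volume_eq_prod] at hinteg ⊢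
  rw [integral_prod _ hinteg]
  simp only [duhamelSymbol, Real.fourier_eq, integral_const_mul]

lemma IsEllipticFamily.norm_duhamelSymbol_le (hl : 0 < l) (ha : IsEllipticFamily l u a)
    (hε : 0 < ε) (hg : Integrable g) (t : ℝ) (v : V) :
    ‖duhamelSymbol a ε g t v‖ ≤
      Real.exp (-(4 * Real.pi ^ 2 * l * ε) * ‖v‖ ^ 2) * ∫ w, ‖g w‖ := by
  rw [ha.duhamelSymbol_eq_integral hl hε hg, ← integral_const_mul]
  refine norm_integral_le_of_norm_le (hg.norm.const_mul _) (.of_forall fun w => ?_)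
  rw [norm_mul, Circle.norm_smul]
  gcongr
  exact ha.norm_propagator_le hl hε t w.1 v

lemma IsEllipticFamily.integrable_hessianSymbol_mul_duhamelSymbol (hl : 0 < l)
    (ha : IsEllipticFamily l u a) (hε : 0 < ε) (he : ‖e‖ ≤ 1) (he' : ‖e'‖ ≤ 1)
    (hgm : Measurable g) (hg : Integrable g) (t : ℝ) :
    Integrable fun v => hessianSymbol e e' v * duhamelSymbol a ε g t v := by
  have hmeas : Measurable fun v => duhamelSymbol a ε g t v :=
    (ha.measurable_duhamelSymbol ε hgm).comp measurable_prodMk_left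
  refine ((integrable_norm_hessianSymbol_mul_exp (l := 4 * Real.pi ^ 2 * l * ε) (by positivity)
    he he').mul_const (∫ w, ‖g w‖)).mono' ((continuous_hessianSymbol e e').measurable.mul
      hmeas).aestronglyMeasurable (.of_forall fun v => ?_)
  rw [norm_mul, mul_assoc]
  gcongr
  exact ha.norm_duhamelSymbol_le hl hε hg t v

lemma IsEllipticFamily.integrable_kernel_integrand (hl : 0 < l) (ha : IsEllipticFamily l u a)
    (hε : 0 < ε) (he : ‖e‖ ≤ 1) (he' : ‖e'‖ ≤ 1) (hg : Integrable g) (z : ℝ × V) :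
    Integrable fun p : (ℝ × V) × V => (Real.fourierChar ⟪p.2, z.2 - p.1.2⟫ : ℂ) *
      (hessianSymbol e e' p.2 * propagator a ε z.1 p.1.1 p.2) * g p.1 := by
  have hprop : Measurable fun p : (ℝ × V) × V => propagator a ε z.1 p.1.1 p.2 :=
    (measurable_propagator ha.intervalIntegrable ε).comp
      (f := fun p : (ℝ × V) × V => (z.1, p.1.1, p.2)) (by fun_prop)
  have hsymbol := (continuous_hessianSymbol e e').measurable
  have hchar : Continuous fun p : (ℝ × V) × V => (Real.fourierChar ⟪p.2, z.2 - p.1.2⟫ : ℂ) := by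
    fun_prop
  refine (hg.norm.mul_prod (integrable_norm_hessianSymbol_mul_exp
    (l := 4 * Real.pi ^ 2 * l * ε) (by positivity) he he')).mono' ?_ (.of_forall fun p => ?_)
  · exact ((hchar.measurable.mul ((hsymbol.comp measurable_snd).mul
      hprop)).aestronglyMeasurable).mul hg.1.comp_fst
  · rw [norm_mul, norm_mul, norm_mul, Circle.norm_coe, one_mul, mul_comm]
    gcongr
    exact ha.norm_propagator_le hl hε _ _ _

lemma IsEllipticFamily.integrable_kernel_mul (hl : 0 < l) (ha : IsEllipticFamily l u a)
    (hε : 0 < ε) (he : ‖e‖ ≤ 1) (he' : ‖e'‖ ≤ 1) (hg : Integrable g) (z : ℝ × V) :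
    Integrable fun w => parabolicKernel a ε z w ![e, e'] * g w := by
  have hinteg := (ha.integrable_kernel_integrand hl hε he he' hg z).integral_prod_left
  simpa only [ha.parabolicKernel_apply hl hε, Real.fourierInv_eq, Circle.smul_def, smul_eq_mul,
    integral_mul_const] using hinteg

lemma IsEllipticFamily.potential_eq_fourierInv (hl : 0 < l) (ha : IsEllipticFamily l u a)
    (hε : 0 < ε) (he : ‖e‖ ≤ 1) (he' : ‖e'‖ ≤ 1) (hg : Integrable g) (z : ℝ × V) :
    potential a ε e e' g z =
      𝓕⁻ (fun v => hessianSymbol e e' v * duhamelSymbol a ε g z.1 v) z.2 := by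
  have hfactor : ∀ (w : ℝ × V) (v : V), (Real.fourierChar ⟪v, z.2 - w.2⟫ : ℂ) *
      (hessianSymbol e e' v * propagator a ε z.1 w.1 v) * g w =
      (Real.fourierChar ⟪v, z.2⟫ : ℂ) * hessianSymbol e e' v *
        (propagator a ε z.1 w.1 v * (Real.fourierChar (-⟪w.2, v⟫) * g w)) := by
    intro w v
    rw [inner_sub_right, sub_eq_add_neg, AddChar.map_add_eq_mul, real_inner_comm v w.2]
    push_cast
    ring
  calc potential a ε e e' g z
      = ∫ w, ∫ v, (Real.fourierChar ⟪v, z.2 - w.2⟫ : ℂ) *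
          (hessianSymbol e e' v * propagator a ε z.1 w.1 v) * g w := by
        simp only [potential, ha.parabolicKernel_apply hl hε, Real.fourierInv_eq,
          Circle.smul_def, smul_eq_mul, integral_mul_const]
    _ = ∫ v, ∫ w, (Real.fourierChar ⟪v, z.2 - w.2⟫ : ℂ) *
          (hessianSymbol e e' v * propagator a ε z.1 w.1 v) * g w :=
        integral_integral_swap (ha.integrable_kernel_integrand hl hε he he' hg z)
    _ = _ := by
        simp only [hfactor, integral_const_mul, Real.fourierInv_eq,
          ha.duhamelSymbol_eq_integral hl hε hg, Circle.smul_def, smul_eq_mul, mul_assoc]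

lemma IsEllipticFamily.measurable_potential (hl : 0 < l) (ha : IsEllipticFamily l u a)
    (hε : 0 < ε) (he : ‖e‖ ≤ 1) (he' : ‖e'‖ ≤ 1) (hgm : Measurable g) (hg : Integrable g) :
    Measurable (potential a ε e e' g) := by
  have hintegrand : Measurable fun q : (ℝ × V) × V => (Real.fourierChar ⟪q.2, q.1.2⟫ : ℂ) *
      (hessianSymbol e e' q.2 * duhamelSymbol a ε g q.1.1 q.2) :=
    (show Continuous fun q : (ℝ × V) × V => (Real.fourierChar ⟪q.2, q.1.2⟫ : ℂ) by
      fun_prop).measurable.mul (((continuous_hessianSymbol e e').measurable.comp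
        measurable_snd).mul ((ha.measurable_duhamelSymbol ε hgm).comp
          (f := fun q : (ℝ × V) × V => (q.1.1, q.2)) (by fun_prop)))
  have heq := funext (ha.potential_eq_fourierInv hl hε he he' hg)
  simp only [Real.fourierInv_eq, Circle.smul_def, smul_eq_mul] at heq
  rw [heq]
  exact hintegrand.stronglyMeasurable.integral_prod_right'.measurable

lemma IsEllipticFamily.potential_add (hl : 0 < l) (ha : IsEllipticFamily l u a)
    (hε : 0 < ε) (he : ‖e‖ ≤ 1) (he' : ‖e'‖ ≤ 1) {g₁ g₂ : ℝ × V → ℂ} (hg₁ : Integrable g₁)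
    (hg₂ : Integrable g₂) (z : ℝ × V) :
    potential a ε e e' (g₁ + g₂) z = potential a ε e e' g₁ z + potential a ε e e' g₂ z := by
  simp only [potential, Pi.add_apply, mul_add]
  exact integral_add (ha.integrable_kernel_mul hl hε he he' hg₁ z)
    (ha.integrable_kernel_mul hl hε he he' hg₂ z)

lemma IsEllipticFamily.enorm_hessianSymbol_mul_duhamelSymbol_le (hl : 0 < l)
    (ha : IsEllipticFamily l u a) (hε : 0 < ε) (he : ‖e‖ ≤ 1) (he' : ‖e'‖ ≤ 1) (t : ℝ) (v : V) :
    ‖hessianSymbol e e' v * duhamelSymbol a ε g t v‖ₑ ≤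
      ∫⁻ s, (Ioi (0 : ℝ)).indicator (fun r => ENNReal.ofReal (4 * Real.pi ^ 2 * ‖v‖ ^ 2 *
        Real.exp (-(l * (4 * Real.pi ^ 2 * ‖v‖ ^ 2)) * r))) (s - t) *
          ‖𝓕 (fun y => g (s, y)) v‖ₑ := by
  rw [duhamelSymbol, ← integral_const_mul]
  refine (enorm_integral_le_lintegral_enorm _).trans (lintegral_mono fun s => ?_)
  rw [← mul_assoc, enorm_mul, ← ofReal_norm, norm_mul]
  gcongr
  have hprop := ha.norm_propagator_le_indicator hl hε t s v
  by_cases hts : s - t ∈ Ioi (0 : ℝ)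
  · rw [indicator_of_mem hts] at hprop ⊢
    gcongr
    exact norm_hessianSymbol_le he he' v
  · rw [indicator_of_notMem hts] at hprop ⊢
    rw [norm_le_zero_iff.mp hprop, norm_zero, mul_zero, ENNReal.ofReal_zero]

lemma IsEllipticFamily.lintegral_enorm_sq_duhamel_le (hl : 0 < l) (ha : IsEllipticFamily l u a)
    (hε : 0 < ε) (he : ‖e‖ ≤ 1) (he' : ‖e'‖ ≤ 1) (hgm : Measurable g) (v : V) :
    ∫⁻ t, ‖hessianSymbol e e' v * duhamelSymbol a ε g t v‖ₑ ^ 2 ≤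
      ENNReal.ofReal l⁻¹ ^ 2 * ∫⁻ s, ‖𝓕 (fun y => g (s, y)) v‖ₑ ^ 2 := by
  set k : ℝ → ℝ≥0∞ := (Ioi (0 : ℝ)).indicator fun r => ENNReal.ofReal
    (4 * Real.pi ^ 2 * ‖v‖ ^ 2 * Real.exp (-(l * (4 * Real.pi ^ 2 * ‖v‖ ^ 2)) * r))
  have hk : Measurable k := Measurable.indicator (by fun_prop) measurableSet_Ioi
  have hslice : Measurable fun s => ‖𝓕 (fun y => g (s, y)) v‖ₑ :=
    ((measurable_fourier_slice hgm).comp measurable_prodMk_right).enorm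
  calc _ ≤ ∫⁻ t, (∫⁻ s, k (s - t) * ‖𝓕 (fun y => g (s, y)) v‖ₑ) ^ 2 :=
        lintegral_mono fun t => pow_le_pow_left'
          (ha.enorm_hessianSymbol_mul_duhamelSymbol_le hl hε he he' t v) 2
    _ ≤ (∫⁻ r, k r) ^ 2 * ∫⁻ s, ‖𝓕 (fun y => g (s, y)) v‖ₑ ^ 2 :=
        lintegral_sq_lintegral_conv_le hk hslice
    _ ≤ _ := by
        gcongr
        exact lintegral_indicator_exp_neg_mul_le (by positivity) hl

lemma IsEllipticFamily.lintegral_enorm_sq_potential_le (hl : 0 < l) (ha : IsEllipticFamily l u a)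
    (hε : 0 < ε) (he : ‖e‖ ≤ 1) (he' : ‖e'‖ ≤ 1) (hgm : Measurable g) (hg : Integrable g) :
    ∫⁻ z, ‖potential a ε e e' g z‖ₑ ^ 2 ≤ ENNReal.ofReal l⁻¹ ^ 2 * ∫⁻ w, ‖g w‖ₑ ^ 2 := by
  have hsymbol : Measurable fun p : ℝ × V =>
      ‖hessianSymbol e e' p.2 * duhamelSymbol a ε g p.1 p.2‖ₑ ^ 2 :=
    ((((continuous_hessianSymbol e e').measurable.comp measurable_snd).mul
      (ha.measurable_duhamelSymbol ε hgm)).enorm).pow_const 2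
  have hslice : Measurable fun p : ℝ × V => ‖𝓕 (fun y => g (p.1, y)) p.2‖ₑ ^ 2 :=
    (measurable_fourier_slice hgm).enorm.pow_const 2
  rw [Measure.volume_eq_prod] at hg ⊢
  calc _ = ∫⁻ t, ∫⁻ x, ‖potential a ε e e' g (t, x)‖ₑ ^ 2 := lintegral_prod _
        ((ha.measurable_potential hl hε he he' hgm hg).enorm.pow_const 2).aemeasurable
    _ ≤ ∫⁻ t, ∫⁻ v, ‖hessianSymbol e e' v * duhamelSymbol a ε g t v‖ₑ ^ 2 := by
        refine lintegral_mono fun t => ?_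
        simp only [ha.potential_eq_fourierInv hl hε he he' hg]
        exact lintegral_enorm_sq_fourierInv_le
          (ha.integrable_hessianSymbol_mul_duhamelSymbol hl hε he he' hgm hg t)
    _ = ∫⁻ v, ∫⁻ t, ‖hessianSymbol e e' v * duhamelSymbol a ε g t v‖ₑ ^ 2 :=
        lintegral_lintegral_swap hsymbol.aemeasurable
    _ ≤ ∫⁻ v, ENNReal.ofReal l⁻¹ ^ 2 * ∫⁻ s, ‖𝓕 (fun y => g (s, y)) v‖ₑ ^ 2 :=
        lintegral_mono fun v => ha.lintegral_enorm_sq_duhamel_le hl hε he he' hgm v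
    _ = ENNReal.ofReal l⁻¹ ^ 2 * ∫⁻ s, ∫⁻ v, ‖𝓕 (fun y => g (s, y)) v‖ₑ ^ 2 := by
        rw [lintegral_const_mul _ hslice.lintegral_prod_left',
          ← lintegral_lintegral_swap hslice.aemeasurable]
    _ ≤ ENNReal.ofReal l⁻¹ ^ 2 * ∫⁻ s, ∫⁻ y, ‖g (s, y)‖ₑ ^ 2 := by
        refine mul_le_mul_right (lintegral_mono_ae ?_) _
        filter_upwards [hg.prod_right_ae] with s hs using lintegral_enorm_sq_fourier_le hs
    _ = _ := by rw [lintegral_prod _ (hgm.enorm.pow_const 2).aemeasurable]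

end Potential

section IntegratingFactor

lemma absolutelyContinuousOnInterval_comp {X Y : Type*} [PseudoMetricSpace X]
    [PseudoMetricSpace Y] {f : ℝ → X} {F : X → Y} {S : Set X} {K : ℝ≥0} {t s : ℝ}
    (hF : LipschitzOnWith K F S) (hf : AbsolutelyContinuousOnInterval f t s)
    (hfS : MapsTo f (uIcc t s) S) : AbsolutelyContinuousOnInterval (F ∘ f) t s := by
  have hbound : Filter.Tendsto (fun E : ℕ × (ℕ → ℝ × ℝ) =>
      (K : ℝ) * ∑ i ∈ Finset.range E.1, dist (f (E.2 i).1) (f (E.2 i).2))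
      (AbsolutelyContinuousOnInterval.totalLengthFilter ⊓
        Filter.principal (AbsolutelyContinuousOnInterval.disjWithin t s)) (nhds 0) := by
    simpa only [mul_zero] using Filter.Tendsto.const_mul (K : ℝ) hf
  refine squeeze_zero' (.of_forall fun _ => Finset.sum_nonneg fun _ _ => dist_nonneg) ?_ hbound
  rw [Filter.eventually_inf_principal]
  refine .of_forall fun E hE => ?_
  rw [Finset.mul_sum]
  exact Finset.sum_le_sum fun i hi =>
    hF.dist_le_mul _ (hfS (hE.1 i hi).1) _ (hfS (hE.1 i hi).2)

lemma absolutelyContinuousOnInterval_exp_comp {f : ℝ → ℝ} {t s : ℝ}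
    (hf : AbsolutelyContinuousOnInterval f t s) :
    AbsolutelyContinuousOnInterval (Real.exp ∘ f) t s := by
  obtain ⟨C, hC⟩ := hf.exists_bound
  have hsmooth : ContDiffOn ℝ 1 Real.exp (Icc (-C) C) := Real.contDiff_exp.contDiffOn
  obtain ⟨K, hK⟩ := hsmooth.exists_lipschitzOnWith one_ne_zero (convex_Icc _ _) isCompact_Icc
  have hmaps : MapsTo f (uIcc t s) (Icc (-C) C) := fun r hr => abs_le.mp (hC r hr)
  exact absolutelyContinuousOnInterval_comp hK hf hmaps

lemma integral_exp_mul_sub_eq {q φ φ' : ℝ → ℝ} {t s : ℝ} (hq : IntervalIntegrable q volume t s)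
    (hφ : ∀ r, HasDerivAt φ (φ' r) r) (hφ' : Continuous φ') :
    ∫ r in t..s, Real.exp (-∫ τ in t..r, q τ) * (φ' r - q r * φ r) =
      Real.exp (-∫ τ in t..s, q τ) * φ s - φ t := by
  have hφ_smooth : ContDiff ℝ 1 φ := contDiff_one_iff_deriv.mpr
    ⟨fun r => (hφ r).differentiableAt, by rwa [funext fun r => (hφ r).deriv]⟩
  have hexp : AbsolutelyContinuousOnInterval (fun r => Real.exp (-∫ τ in t..r, q τ)) t s :=
    absolutelyContinuousOnInterval_exp_comp
      (hq.absolutelyContinuousOnInterval_intervalIntegral left_mem_uIcc).neg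
  have hFTC :=
    (hexp.fun_mul hφ_smooth.contDiffOn.absolutelyContinuousOnInterval).integral_deriv_eq_sub
  rw [intervalIntegral.integral_same, neg_zero, Real.exp_zero, one_mul] at hFTC
  rw [← hFTC]
  refine intervalIntegral.integral_congr_ae ?_
  filter_upwards [hq.ae_hasDerivAt_integral] with r hr hmem
  have hprim := hr (uIoc_subset_uIcc hmem) t left_mem_uIcc
  refine Eq.trans ?_ (hprim.fun_neg.exp.fun_mul (hφ r)).deriv.symm
  ring

lemma integral_exp_smul_sub_eq {E : Type*} [NormedAddCommGroup E] [NormedSpace ℝ E]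
    [CompleteSpace E] {q : ℝ → ℝ} {φ φ' : ℝ → E} {t s : ℝ} (hq : IntervalIntegrable q volume t s)
    (hφ : ∀ r, HasDerivAt φ (φ' r) r) (hφ' : Continuous φ') :
    ∫ r in t..s, Real.exp (-∫ τ in t..r, q τ) • (φ' r - q r • φ r) =
      Real.exp (-∫ τ in t..s, q τ) • φ s - φ t := by
  have hφ_cont : Continuous φ := continuous_iff_continuousAt.mpr fun r => (hφ r).continuousAt
  have hexp : ContinuousOn (fun r => Real.exp (-∫ τ in t..r, q τ)) (uIcc t s) :=
    (intervalIntegral.continuousOn_primitive_interval' hq left_mem_uIcc).neg.rexp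
  have hinteg : IntervalIntegrable (fun r => Real.exp (-∫ τ in t..r, q τ) • (φ' r - q r • φ r))
      volume t s :=
    ((hφ'.intervalIntegrable t s).sub (hq.smul_continuousOn hφ_cont.continuousOn)).continuousOn_smul
      hexp
  refine (SeparatingDual.eq_iff_forall_dual_eq (R := ℝ)).mpr fun L => ?_
  rw [← L.intervalIntegral_comp_comm hinteg]
  simpa only [map_sub, map_smul, smul_eq_mul, Function.comp_apply] using
    integral_exp_mul_sub_eq hq (fun r => L.hasFDerivAt.comp_hasDerivAt r (hφ r))
      (L.continuous.comp hφ')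

end IntegratingFactor

section TestFunction

/-- The class `C₀^∞`, with complex values so that the Fourier transform applies. -/
structure IsTestFunction {E : Type*} [NormedAddCommGroup E] [NormedSpace ℝ E] (f : E → ℂ) :
    Prop where
  contDiff : ContDiff ℝ ∞ f
  hasCompactSupport : HasCompactSupport f

/-- The derivative in the direction `h`. -/
def dirDeriv {E : Type*} [NormedAddCommGroup E] [NormedSpace ℝ E] (h : E) (f : E → ℂ) (z : E) :
    ℂ :=
  fderiv ℝ f z h

lemma IsTestFunction.isTestFunction_dirDeriv {E : Type*} [NormedAddCommGroup E]
    [NormedSpace ℝ E] {f : E → ℂ} (hf : IsTestFunction f) (h : E) : IsTestFunction (dirDeriv h f) :=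
  ⟨(hf.contDiff.fderiv_right (m := ∞) (by simp)).clm_apply contDiff_const,
    hf.hasCompactSupport.fderiv_apply ℝ h⟩

variable {V : Type*} [NormedAddCommGroup V] [NormedSpace ℝ V] {U : ℝ × V → ℂ}

lemma IsTestFunction.slice (hU : IsTestFunction U) (t : ℝ) :
    IsTestFunction fun y => U (t, y) where
  contDiff := hU.contDiff.comp (by fun_prop)
  hasCompactSupport := hU.hasCompactSupport.comp_isClosedEmbedding
    (Function.LeftInverse.isClosedEmbedding (f := Prod.snd) (g := fun y : V => (t, y))
      (fun _ => rfl) continuous_snd (by fun_prop))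

lemma IsTestFunction.hasDerivAt_slice (hU : IsTestFunction U) (t : ℝ) (y : V) :
    HasDerivAt (fun s => U (s, y)) (dirDeriv (1, 0) U (t, y)) t :=
  (hU.contDiff.differentiable (by simp) (t, y)).hasFDerivAt.comp_hasDerivAt t
    ((hasDerivAt_id t).prodMk (hasDerivAt_const t y))

lemma IsTestFunction.fderiv_slice_apply (hU : IsTestFunction U) (e : V) (t : ℝ) (y : V) :
    fderiv ℝ (fun y => U (t, y)) y e = dirDeriv (0, e) U (t, y) := by
  have hU' := (hU.contDiff.differentiable (by simp) (t, y)).hasFDerivAt.comp y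
    (hasFDerivAt_prodMk_right t y)
  exact congrArg (fun L : V →L[ℝ] ℂ => L e) hU'.fderiv

lemma IsTestFunction.exists_forall_lt_eq_zero (hU : IsTestFunction U) :
    ∃ T, ∀ s, T < s → ∀ y, U (s, y) = 0 := by
  obtain ⟨T, hT⟩ := hU.hasCompactSupport.isCompact.isBounded.subset_closedBall 0
  refine ⟨T, fun s hs y => image_eq_zero_of_notMem_tsupport fun hmem => hs.not_ge ?_⟩
  have hnorm := (norm_fst_le _).trans (mem_closedBall_zero_iff.mp (hT hmem))
  exact (le_abs_self s).trans hnorm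

variable [MeasurableSpace V] [BorelSpace V] [FiniteDimensional ℝ V]

lemma IsTestFunction.exists_integrable_bound (hU : IsTestFunction U) (μ : Measure V)
    [IsFiniteMeasureOnCompacts μ] :
    ∃ B : V → ℝ, Integrable B μ ∧ ∀ s y, ‖U (s, y)‖ ≤ B y := by
  obtain ⟨M, hM⟩ := hU.hasCompactSupport.exists_bound_of_continuous hU.contDiff.continuous
  obtain ⟨T, hT⟩ := hU.hasCompactSupport.isCompact.isBounded.subset_closedBall 0
  refine ⟨(closedBall 0 T).indicator fun _ => M, ?_, fun s y => ?_⟩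
  · rw [integrable_indicator_iff measurableSet_closedBall]
    exact integrableOn_const (isCompact_closedBall _ _).measure_lt_top.ne
  by_cases hy : y ∈ closedBall 0 T
  · rw [indicator_of_mem hy]
    exact hM _
  · have hmem : (s, y) ∉ tsupport U := fun hmem => hy (mem_closedBall_zero_iff.mpr
      ((norm_snd_le _).trans (mem_closedBall_zero_iff.mp (hT hmem))))
    rw [indicator_of_notMem hy, image_eq_zero_of_notMem_tsupport hmem, norm_zero]

end TestFunction

section FourierSlice

set_option maxSynthPendingDepth 3

open scoped RealInnerProductSpace LineDeriv

variable {V : Type*} [NormedAddCommGroup V] [InnerProductSpace ℝ V] [FiniteDimensional ℝ V]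
  [MeasurableSpace V] [BorelSpace V] {U : ℝ × V → ℂ}

lemma IsTestFunction.fourier_slice_dirDeriv (hU : IsTestFunction U) (e : V) (t : ℝ) (v : V) :
    𝓕 (fun y => dirDeriv (0, e) U (t, y)) v =
      2 * Real.pi * Complex.I * ⟪v, e⟫ * 𝓕 (fun y => U (t, y)) v := by
  have hslice := hU.slice t
  have hgrowth : (fun w : V => ⟪w, e⟫).HasTemperateGrowth := by fun_prop
  have hderiv := congrArg (fun φ : SchwartzMap V ℂ => φ v) (SchwartzMap.fourier_lineDerivOp_eq
    (hslice.hasCompactSupport.toSchwartzMap hslice.contDiff) e)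
  simp only [smul_apply, SchwartzMap.smulLeftCLM_apply_apply hgrowth,
    SchwartzMap.fourier_coe] at hderiv
  have hfun : (fun y => dirDeriv (0, e) U (t, y)) =
      ∂_{e} (hslice.hasCompactSupport.toSchwartzMap hslice.contDiff) :=
    funext fun y => (hU.fderiv_slice_apply e t y).symm
  rw [hfun, hderiv, smul_eq_mul, Complex.real_smul, ← mul_assoc]
  rfl

lemma IsTestFunction.fourier_slice_dirDeriv_dirDeriv (hU : IsTestFunction U) (e e' : V) (t : ℝ)
    (v : V) :
    𝓕 (fun y => dirDeriv (0, e) (dirDeriv (0, e') U) (t, y)) v =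
      hessianSymbol e e' v * 𝓕 (fun y => U (t, y)) v := by
  rw [(hU.isTestFunction_dirDeriv (0, e')).fourier_slice_dirDeriv, hU.fourier_slice_dirDeriv,
    hessianSymbol]
  push_cast
  linear_combination 4 * Real.pi ^ 2 * (⟪v, e⟫ * ⟪v, e'⟫) * 𝓕 (fun y => U (t, y)) v * Complex.I_sq

lemma IsTestFunction.memLp (hU : IsTestFunction U) {p : ℝ≥0∞} : MemLp U p :=
  hU.contDiff.continuous.memLp_of_hasCompactSupport hU.hasCompactSupport

lemma IsTestFunction.hasDerivAt_fourier_slice (hU : IsTestFunction U) (t : ℝ) (v : V) :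
    HasDerivAt (fun s => 𝓕 (fun y => U (s, y)) v) (𝓕 (fun y => dirDeriv (1, 0) U (t, y)) v) t := by
  obtain ⟨B, hB, hUB⟩ := (hU.isTestFunction_dirDeriv (1, 0)).exists_integrable_bound volume
  have hcont : ∀ {W : ℝ × V → ℂ}, IsTestFunction W → ∀ s,
      Continuous fun y => Real.fourierChar (-⟪y, v⟫) • W (s, y) := fun hW s => by
    have hchar : Continuous fun y : V => Real.fourierChar (-⟪y, v⟫) := by fun_prop
    exact hchar.smul (hW.slice s).contDiff.continuous
  have hinteg : Integrable fun y => Real.fourierChar (-⟪y, v⟫) • U (t, y) :=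
    (hcont hU t).integrable_of_hasCompactSupport (hU.slice t).hasCompactSupport.smul_left
  simp only [Real.fourier_eq]
  refine (hasDerivAt_integral_of_dominated_loc_of_deriv_le (bound := B)
    (F' := fun s y => Real.fourierChar (-⟪y, v⟫) • dirDeriv (1, 0) U (s, y)) Filter.univ_mem
    (.of_forall fun s => (hcont hU s).aestronglyMeasurable) hinteg
    (hcont (hU.isTestFunction_dirDeriv (1, 0)) t).aestronglyMeasurable
    (.of_forall fun y s _ => ?_) hB (.of_forall fun y s _ => ?_)).2
  · rw [Circle.norm_smul]
    exact hUB s y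
  · exact (hU.hasDerivAt_slice s y).const_smul _

lemma IsTestFunction.continuous_fourier_slice (hU : IsTestFunction U) (v : V) :
    Continuous fun s => 𝓕 (fun y => U (s, y)) v :=
  continuous_iff_continuousAt.mpr fun s => (hU.hasDerivAt_fourier_slice s v).continuousAt

end FourierSlice

section Representation

set_option maxSynthPendingDepth 3

open scoped RealInnerProductSpace

variable {V : Type*} [NormedAddCommGroup V] [InnerProductSpace ℝ V]
  {a : ℝ → V →L[ℝ] V →L[ℝ] ℝ} {l u ε : ℝ} {e e' : V}

lemma gaussianSymbol_heatForm_eq_mul (ha : ∀ t s, IntervalIntegrable a volume t s) (r t s : ℝ)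
    (v : V) :
    gaussianSymbol (heatForm a r s) v = gaussianSymbol (heatForm a r t) v *
      (Real.exp (-∫ τ in t..s, 4 * Real.pi ^ 2 * a τ v v) : ℝ) := by
  rw [← heatForm_add ha r t s, gaussianSymbol, gaussianSymbol, Complex.ofReal_exp,
    ← Complex.exp_add, add_apply, add_apply, heatForm_apply_apply (ha t s),
    intervalIntegral.integral_const_mul]
  congr 1
  push_cast
  ring

lemma gaussianSymbol_heatForm_self (a : ℝ → V →L[ℝ] V →L[ℝ] ℝ) (t : ℝ) (v : V) :
    gaussianSymbol (heatForm a t t) v = 1 := by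
  simp [gaussianSymbol, heatForm]

lemma IsEllipticFamily.norm_gaussianSymbol_heatForm_le_one (hl : 0 ≤ l)
    (ha : IsEllipticFamily l u a) {t s : ℝ} (hts : t ≤ s) (v : V) :
    ‖gaussianSymbol (heatForm a t s) v‖ ≤ 1 := by
  refine (ha.norm_gaussianSymbol_heatForm_le hts v).trans (Real.exp_le_one_iff.mpr ?_)
  have : 0 ≤ l * (s - t) * ‖v‖ ^ 2 := by have := sub_nonneg.mpr hts; positivity
  nlinarith [Real.pi_pos]

lemma sum_sum_mul_inner_mul_inner {ι : Type*} [Fintype ι] (b : OrthonormalBasis ι ℝ V)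
    (A : V →L[ℝ] V →L[ℝ] ℝ) (v : V) :
    ∑ i, ∑ j, A (b i) (b j) * (⟪v, b i⟫ * ⟪v, b j⟫) = A v v := by
  conv_rhs => rw [← b.sum_repr' v]
  simp only [map_sum, map_smul, sum_apply, smul_apply, smul_eq_mul, Finset.mul_sum,
    real_inner_comm v]
  rw [Finset.sum_comm]
  exact Finset.sum_congr rfl fun i _ => Finset.sum_congr rfl fun j _ => by ring

variable [FiniteDimensional ℝ V] [MeasurableSpace V] [BorelSpace V]

lemma duhamelSymbol_eq_neg_mul (ha : ∀ t s, IntervalIntegrable a volume t s) {g : ℝ × V → ℂ}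
    {φ φ' : ℝ → ℂ} {v : V} (hφ : ∀ s, HasDerivAt φ (φ' s) s) (hφ' : Continuous φ')
    (hg : ∀ s, 𝓕 (fun y => g (s, y)) v = φ' s - (4 * Real.pi ^ 2 * a s v v : ℝ) • φ s)
    {T : ℝ} (hT : ∀ s, T < s → φ s = 0) (t : ℝ) :
    duhamelSymbol a ε g t v = -(gaussianSymbol (heatForm a (t - ε) t) v * φ t) := by
  have hvanish : ∀ s, T < s → 𝓕 (fun y => g (s, y)) v = 0 := fun s hs => by
    have hzero : φ =ᶠ[nhds s] fun _ => 0 := by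
      filter_upwards [Ioi_mem_nhds hs] with r hr using hT r hr
    rw [hg, hT s hs, smul_zero, sub_zero, ← (hφ s).deriv, hzero.deriv_eq, deriv_const]
  have htS : t ≤ max t T + 1 := (le_max_left t T).trans (by linarith)
  have hTS : T < max t T + 1 := (le_max_right t T).trans_lt (by linarith)
  have hODE := integral_exp_smul_sub_eq (q := fun s => 4 * Real.pi ^ 2 * a s v v)
    (t := t) (s := max t T + 1)
    ((intervalIntegrable_apply_apply (ha _ _) v v).const_mul _) hφ hφ'
  rw [hT _ hTS, smul_zero, zero_sub] at hODE
  rw [← mul_neg, ← hODE, ← intervalIntegral.integral_const_mul,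
    intervalIntegral.integral_of_le htS, ← integral_indicator measurableSet_Ioc, duhamelSymbol]
  refine integral_congr_ae (.of_forall fun s => ?_)
  by_cases hs : s ∈ Ioc t (max t T + 1)
  · simp only [indicator_of_mem hs, propagator, if_pos hs.1, hg, Complex.real_smul,
      gaussianSymbol_heatForm_eq_mul ha (t - ε) t s, mul_assoc]
  · simp only [indicator_of_notMem hs, propagator]
    split_ifs with hts
    · rw [hvanish s (hTS.trans (not_le.mp fun hle => hs ⟨hts, hle⟩)), mul_zero]
    · rw [zero_mul]

/-- The operator `∂ₜ + tr (a D²)`, written in an orthonormal basis. -/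
def parabolicOp {ι : Type*} [Fintype ι] (b : OrthonormalBasis ι ℝ V)
    (a : ℝ → V →L[ℝ] V →L[ℝ] ℝ) (U : ℝ × V → ℂ) (z : ℝ × V) : ℂ :=
  dirDeriv (1, 0) U z +
    ∑ i, ∑ j, (a z.1 (b i) (b j) : ℂ) * dirDeriv (0, b i) (dirDeriv (0, b j) U) z

variable {ι : Type*} [Fintype ι] (b : OrthonormalBasis ι ℝ V) {U : ℝ × V → ℂ}

lemma measurable_parabolicOp (ham : ∀ e e', Measurable fun s => a s e e')
    (hU : IsTestFunction U) : Measurable (parabolicOp b a U) := by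
  have hcoeff : ∀ i j, Measurable fun z : ℝ × V => (a z.1 (b i) (b j) : ℂ) := fun i j =>
    Complex.measurable_ofReal.comp ((ham (b i) (b j)).comp measurable_fst)
  have hderiv : ∀ i j, Measurable (dirDeriv (0, b i) (dirDeriv (0, b j) U)) := fun i j =>
    ((hU.isTestFunction_dirDeriv _).isTestFunction_dirDeriv _).contDiff.continuous.measurable
  exact (hU.isTestFunction_dirDeriv _).contDiff.continuous.measurable.add
    (Finset.measurable_fun_sum _ fun i _ => Finset.measurable_fun_sum _ fun j _ =>
      (hcoeff i j).mul (hderiv i j))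

lemma IsEllipticFamily.memLp_parabolicOp (ha : IsEllipticFamily l u a)
    (ham : ∀ e e', Measurable fun s => a s e e') (hU : IsTestFunction U) (p : ℝ≥0∞) :
    MemLp (parabolicOp b a U) p := by
  refine (hU.isTestFunction_dirDeriv _).memLp.add
    (memLp_finsetSum _ fun i _ => memLp_finsetSum _ fun j _ => ?_)
  have hderiv := (hU.isTestFunction_dirDeriv (0, b j)).isTestFunction_dirDeriv (0, b i)
  have hcoeff : Measurable fun z : ℝ × V => (a z.1 (b i) (b j) : ℂ) :=
    Complex.measurable_ofReal.comp ((ham (b i) (b j)).comp measurable_fst)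
  refine hderiv.memLp.of_le_mul (c := u)
    (hcoeff.mul hderiv.contDiff.continuous.measurable).aestronglyMeasurable (.of_forall fun z => ?_)
  rw [norm_mul, Complex.norm_real]
  gcongr
  refine ((a z.1).le_opNorm₂ (b i) (b j)).trans ?_
  rw [b.norm_eq_one, b.norm_eq_one, mul_one, mul_one]
  exact (ha.isElliptic z.1).norm_le

lemma IsEllipticFamily.integrable_parabolicOp (ha : IsEllipticFamily l u a)
    (ham : ∀ e e', Measurable fun s => a s e e') (hU : IsTestFunction U) :
    Integrable (parabolicOp b a U) :=
  memLp_one_iff_integrable.mp (ha.memLp_parabolicOp b ham hU 1)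

lemma IsTestFunction.fourier_slice_parabolicOp (hU : IsTestFunction U) (t : ℝ) (v : V) :
    𝓕 (fun y => parabolicOp b a U (t, y)) v = 𝓕 (fun y => dirDeriv (1, 0) U (t, y)) v -
      (4 * Real.pi ^ 2 * a t v v : ℝ) • 𝓕 (fun y => U (t, y)) v := by
  have hinteg : ∀ {W : ℝ × V → ℂ}, IsTestFunction W →
      Integrable fun y => (Real.fourierChar (-⟪y, v⟫) : ℂ) * W (t, y) := fun hW => by
    have hslice := hW.slice t
    exact (hslice.contDiff.continuous.integrable_of_hasCompactSupport
      hslice.hasCompactSupport).bdd_mul (c := 1)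
      (by fun_prop : Continuous fun y : V => (Real.fourierChar (-⟪y, v⟫) : ℂ)).aestronglyMeasurable
      (.of_forall fun _ => (Circle.norm_coe _).le)
  have hterm : ∀ i j, Integrable fun y => (a t (b i) (b j) : ℂ) *
      ((Real.fourierChar (-⟪y, v⟫) : ℂ) * dirDeriv (0, b i) (dirDeriv (0, b j) U) (t, y)) :=
    fun i j => (hinteg ((hU.isTestFunction_dirDeriv _).isTestFunction_dirDeriv _)).const_mul _
  have hhess := fun i j => hU.fourier_slice_dirDeriv_dirDeriv (b i) (b j) t v
  simp only [Real.fourier_eq, Circle.smul_def, smul_eq_mul] at hhess ⊢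
  simp only [parabolicOp, mul_add, Finset.mul_sum, mul_left_comm _ (a t _ _ : ℂ)]
  rw [integral_add (hinteg (hU.isTestFunction_dirDeriv _)) (integrable_finsetSum _ fun i _ =>
      integrable_finsetSum _ fun j _ => hterm i j),
    integral_finsetSum _ fun i _ => integrable_finsetSum _ fun j _ => hterm i j]
  simp only [integral_finsetSum _ fun j _ => hterm _ j, integral_const_mul, hhess,
    ← sum_sum_mul_inner_mul_inner b (a t) v, hessianSymbol, sub_eq_add_neg, Complex.real_smul]
  push_cast
  simp only [Finset.mul_sum, Finset.sum_mul, ← Finset.sum_neg_distrib]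
  exact congrArg _ (Finset.sum_congr rfl fun i _ => Finset.sum_congr rfl fun j _ => by ring)

lemma IsEllipticFamily.duhamelSymbol_parabolicOp (ha : IsEllipticFamily l u a)
    (hU : IsTestFunction U) (t : ℝ) (v : V) :
    duhamelSymbol a ε (parabolicOp b a U) t v =
      -(gaussianSymbol (heatForm a (t - ε) t) v * 𝓕 (fun y => U (t, y)) v) := by
  obtain ⟨T, hT⟩ := hU.exists_forall_lt_eq_zero
  refine duhamelSymbol_eq_neg_mul ha.intervalIntegrable (T := T)
    (fun s => hU.hasDerivAt_fourier_slice s v)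
    ((hU.isTestFunction_dirDeriv _).continuous_fourier_slice v)
    (fun s => hU.fourier_slice_parabolicOp b s v) (fun s hs => ?_) t
  simp only [hT s hs, Real.fourier_eq, smul_zero, integral_zero]

lemma IsEllipticFamily.potential_parabolicOp_eq_fourierInv (hl : 0 < l)
    (ha : IsEllipticFamily l u a) (ham : ∀ e e', Measurable fun s => a s e e') (hε : 0 < ε)
    (he : ‖e‖ ≤ 1) (he' : ‖e'‖ ≤ 1) (hU : IsTestFunction U) (z : ℝ × V) :
    potential a ε e e' (parabolicOp b a U) z =
      𝓕⁻ (fun v => -(gaussianSymbol (heatForm a (z.1 - ε) z.1) v *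
        𝓕 (fun y => dirDeriv (0, e) (dirDeriv (0, e') U) (z.1, y)) v)) z.2 := by
  rw [ha.potential_eq_fourierInv hl hε he he' (ha.integrable_parabolicOp b ham hU)]
  refine congrFun (congrArg _ (funext fun v => ?_)) z.2
  rw [ha.duhamelSymbol_parabolicOp b hU, hU.fourier_slice_dirDeriv_dirDeriv]
  ring

lemma IsEllipticFamily.tendsto_fourierInv_gaussianSymbol_mul (hl : 0 ≤ l)
    (ha : IsEllipticFamily l u a) {F : V → ℂ} (hF_cont : Continuous F) (hF : Integrable F) (t : ℝ)
    (x : V) :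
    Filter.Tendsto
      (fun ε => 𝓕⁻ (fun v => -(gaussianSymbol (heatForm a (t - ε) t) v * F v)) x)
      (nhdsWithin 0 (Ioi 0)) (nhds (-𝓕⁻ F x)) := by
  have hsymbol := continuous_gaussianSymbol_heatForm ha.intervalIntegrable
  simp only [Real.fourierInv_eq, ← integral_neg, Circle.smul_def, smul_eq_mul]
  refine tendsto_integral_filter_of_dominated_convergence (fun v => ‖F v‖) ?_ ?_ hF.norm ?_
  · refine .of_forall fun ε => Continuous.aestronglyMeasurable ?_
    have := hsymbol.comp (f := fun v : V => (t - ε, t, v)) (by fun_prop)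
    fun_prop
  · filter_upwards [self_mem_nhdsWithin] with ε (hε : 0 < ε)
    refine .of_forall fun v => ?_
    rw [norm_mul, Circle.norm_coe, one_mul, norm_neg, norm_mul]
    exact mul_le_of_le_one_left (norm_nonneg _)
      (ha.norm_gaussianSymbol_heatForm_le_one hl (by linarith) v)
  · refine .of_forall fun v => ?_
    have hlim : Filter.Tendsto (fun ε => gaussianSymbol (heatForm a (t - ε) t) v)
        (nhdsWithin 0 (Ioi 0)) (nhds 1) := by
      have := (hsymbol.comp (f := fun ε : ℝ => (t - ε, t, v)) (by fun_prop)).tendsto 0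
      simp only [Function.comp_apply, sub_zero, gaussianSymbol_heatForm_self] at this
      exact this.mono_left nhdsWithin_le_nhds
    simpa only [one_mul, mul_neg] using
      ((hlim.mul_const (F v)).const_mul (Real.fourierChar ⟪v, x⟫ : ℂ)).neg

lemma IsEllipticFamily.tendsto_potential_parabolicOp (hl : 0 < l) (ha : IsEllipticFamily l u a)
    (ham : ∀ e e', Measurable fun s => a s e e') (he : ‖e‖ ≤ 1) (he' : ‖e'‖ ≤ 1)
    (hU : IsTestFunction U) (z : ℝ × V) :
    Filter.Tendsto (fun ε => potential a ε e e' (parabolicOp b a U) z) (nhdsWithin 0 (Ioi 0))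
      (nhds (-dirDeriv (0, e) (dirDeriv (0, e') U) z)) := by
  have hslice := ((hU.isTestFunction_dirDeriv (0, e')).isTestFunction_dirDeriv (0, e)).slice z.1
  set H : V → ℂ := fun y => dirDeriv (0, e) (dirDeriv (0, e') U) (z.1, y)
  set S : SchwartzMap V ℂ := hslice.hasCompactSupport.toSchwartzMap hslice.contDiff
  have hFH : Integrable (𝓕 H) := SchwartzMap.fourier_coe S ▸ (𝓕 S).integrable
  have hinversion : 𝓕⁻ (𝓕 H) z.2 = H z.2 :=
    congrFun (hslice.contDiff.continuous.fourierInv_fourier_eq S.integrable hFH) z.2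
  change Filter.Tendsto _ _ (nhds (-H z.2))
  rw [← hinversion]
  refine (ha.tendsto_fourierInv_gaussianSymbol_mul hl.le (continuous_fourier S.integrable) hFH z.1
    z.2).congr' (eventually_nhdsWithin_of_forall fun ε hε => ?_)
  exact (ha.potential_parabolicOp_eq_fourierInv b hl ham hε he he' hU z).symm

end Representation

section Coordinates

set_option maxSynthPendingDepth 3

variable {d : ℕ} {δ : ℝ}

/-- The bilinear form `(v, w) ↦ ∑ i, ∑ j, M i j * v i * w j` of a matrix, which carries matrix
coefficients over to the coordinate-free setting. -/
def matrixForm (M : Matrix (Fin d) (Fin d) ℝ) : Spc d →L[ℝ] Spc d →L[ℝ] ℝ :=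
  ∑ i, ∑ j, M i j • (EuclideanSpace.proj (𝕜 := ℝ) i).smulRight (EuclideanSpace.proj (𝕜 := ℝ) j)

lemma matrixForm_apply_apply (M : Matrix (Fin d) (Fin d) ℝ) (v w : Spc d) :
    matrixForm M v w = ∑ i, ∑ j, M i j * (v i * w j) := by
  simp [matrixForm, sum_apply]

lemma matrixForm_single (M : Matrix (Fin d) (Fin d) ℝ) (i j : Fin d) :
    matrixForm M (EuclideanSpace.single i 1) (EuclideanSpace.single j 1) = M i j := by
  simp [matrixForm_apply_apply]

lemma inS.le_matrixForm {M : Matrix (Fin d) (Fin d) ℝ} (hM : inS d δ M) (v : Spc d) :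
    δ * ‖v‖ ^ 2 ≤ matrixForm M v v := by
  simpa only [matrixForm_apply_apply, EuclideanSpace.real_norm_sq_eq, mul_assoc] using (hM.2 v).1

lemma inS.matrixForm_le {M : Matrix (Fin d) (Fin d) ℝ} (hM : inS d δ M) (v : Spc d) :
    matrixForm M v v ≤ δ⁻¹ * ‖v‖ ^ 2 := by
  simpa only [matrixForm_apply_apply, EuclideanSpace.real_norm_sq_eq, mul_assoc] using (hM.2 v).2

lemma matrixForm_comm {M : Matrix (Fin d) (Fin d) ℝ} (hM : M.IsSymm) (v w : Spc d) :
    matrixForm M v w = matrixForm M w v := by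
  rw [matrixForm_apply_apply, matrixForm_apply_apply, Finset.sum_comm]
  refine Finset.sum_congr rfl fun j _ => Finset.sum_congr rfl fun i _ => ?_
  rw [hM.apply, mul_comm (v i)]

lemma inS.isElliptic_matrixForm (hδ : 0 < δ) {M : Matrix (Fin d) (Fin d) ℝ} (hM : inS d δ M) :
    IsElliptic δ δ⁻¹ (matrixForm M) where
  le_apply := hM.le_matrixForm
  norm_le := by
    have hnonneg : ∀ v, 0 ≤ matrixForm M v v := fun v =>
      (by positivity : 0 ≤ δ * ‖v‖ ^ 2).trans (hM.le_matrixForm v)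
    refine ContinuousLinearMap.opNorm_le_bound₂ _ (by positivity) fun v w => ?_
    have hcs : matrixForm M v w ^ 2 ≤ matrixForm M v v * matrixForm M w w :=
      LinearMap.BilinForm.apply_sq_le_of_symm (matrixForm M).toLinearMap₁₂
        hnonneg ⟨matrixForm_comm hM.1⟩ v w
    refine abs_le_of_sq_le_sq (hcs.trans ?_) (by positivity)
    calc _ ≤ δ⁻¹ * ‖v‖ ^ 2 * (δ⁻¹ * ‖w‖ ^ 2) := by
          gcongr
          · exact hnonneg w
          · exact hM.matrixForm_le v
          · exact hM.matrixForm_le w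
      _ = _ := by ring

variable {a : ℝ → Matrix (Fin d) (Fin d) ℝ}

lemma measurable_matrix_entry (ha : Measurable a) (i j : Fin d) : Measurable fun t => a t i j :=
  (measurable_pi_apply j).comp ((measurable_pi_apply i).comp ha)

lemma measurable_matrixForm_apply_apply (ha : Measurable a) (v w : Spc d) :
    Measurable fun t => matrixForm (a t) v w := by
  simp only [matrixForm_apply_apply]
  exact Finset.measurable_fun_sum _ fun i _ => Finset.measurable_fun_sum _ fun j _ =>
    (measurable_matrix_entry ha i j).mul_const _

lemma stronglyMeasurable_matrixForm (ha : Measurable a) :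
    StronglyMeasurable fun t => matrixForm (a t) :=
  Finset.stronglyMeasurable_fun_sum _ fun i _ => Finset.stronglyMeasurable_fun_sum _ fun j _ =>
    (measurable_matrix_entry ha i j).stronglyMeasurable.smul_const _

lemma isEllipticFamily_matrixForm (hδ : 0 < δ) (ha : Measurable a) (haS : ∀ t, inS d δ (a t)) :
    IsEllipticFamily δ δ⁻¹ fun t => matrixForm (a t) where
  intervalIntegrable _ _ := (intervalIntegrable_const (c := δ⁻¹)).mono_fun
    (stronglyMeasurable_matrixForm ha).aestronglyMeasurable (.of_forall fun τ =>
      ((haS τ).isElliptic_matrixForm hδ).norm_le.trans (le_abs_self _))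
  isElliptic t := (haS t).isElliptic_matrixForm hδ

variable {u : Pt d → ℝ}

lemma CinfC.isTestFunction (hu : CinfC u) : IsTestFunction fun z => (u z : ℂ) where
  contDiff := Complex.ofRealCLM.contDiff.comp hu.1
  hasCompactSupport := hu.2.comp_left Complex.ofReal_zero

lemma CinfC.ofReal_Dt (hu : CinfC u) (z : Pt d) :
    (Dt u z : ℂ) = dirDeriv (1, 0) (fun z => (u z : ℂ)) z := by
  have hdiff : DifferentiableAt ℝ (fun s => u (s, z.2)) z.1 :=
    (hu.1.differentiable (by simp)).comp (by fun_prop) z.1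
  exact hdiff.hasDerivAt.ofReal_comp.unique (hu.isTestFunction.hasDerivAt_slice z.1 z.2)

lemma CinfC.ofReal_Dx (hu : CinfC u) (i : Fin d) (z : Pt d) :
    (Dx i u z : ℂ) = dirDeriv (0, EuclideanSpace.single i 1) (fun z => (u z : ℂ)) z := by
  have hdiff : DifferentiableAt ℝ (fun y => u (z.1, y)) z.2 :=
    (hu.1.differentiable (by simp)).comp (by fun_prop) z.2
  have hcomp := (Complex.ofRealCLM.hasFDerivAt.comp z.2 hdiff.hasFDerivAt).fderiv
  exact (congrArg (fun L : Spc d →L[ℝ] ℂ => L (EuclideanSpace.single i 1)) hcomp).symm.trans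
    (hu.isTestFunction.fderiv_slice_apply _ z.1 z.2)

lemma CinfC.cinfC_Dx (hu : CinfC u) (i : Fin d) : CinfC (Dx i u) := by
  have htest := hu.isTestFunction.isTestFunction_dirDeriv (0, EuclideanSpace.single i 1)
  have hre : Dx i u = Complex.re ∘ dirDeriv (0, EuclideanSpace.single i 1) fun z => (u z : ℂ) :=
    funext fun z => by rw [Function.comp_apply, ← hu.ofReal_Dx, Complex.ofReal_re]
  rw [hre]
  exact ⟨Complex.reCLM.contDiff.comp htest.contDiff,
    htest.hasCompactSupport.comp_left Complex.zero_re⟩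

lemma CinfC.measurable_Dxx (hu : CinfC u) (i j : Fin d) : Measurable (Dxx i j u) :=
  ((hu.cinfC_Dx j).cinfC_Dx i).1.continuous.measurable

lemma CinfC.ofReal_Dxx (hu : CinfC u) (i j : Fin d) (z : Pt d) :
    (Dxx i j u z : ℂ) = dirDeriv (0, EuclideanSpace.single i 1)
      (dirDeriv (0, EuclideanSpace.single j 1) fun z => (u z : ℂ)) z := by
  rw [Dxx, (hu.cinfC_Dx j).ofReal_Dx]
  simp only [hu.ofReal_Dx]

lemma CinfC.ofReal_parabolicOp (hu : CinfC u) (a : ℝ → Matrix (Fin d) (Fin d) ℝ) (z : Pt d) :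
    ((Dt u z + ∑ i, ∑ j, a z.1 i j * Dxx i j u z : ℝ) : ℂ) =
      parabolicOp (EuclideanSpace.basisFun (Fin d) ℝ) (fun t => matrixForm (a t))
        (fun z => (u z : ℂ)) z := by
  simp only [parabolicOp, EuclideanSpace.basisFun_apply, matrixForm_single, ← hu.ofReal_Dxx,
    ← hu.ofReal_Dt]
  push_cast
  rfl

end Coordinates

section MaximalFunction

variable {d : ℕ} {R t : ℝ} {x : Spc d}

lemma measurableSet_cyl : MeasurableSet (cyl d R t x) :=
  measurableSet_Ioo.prod measurableSet_ball

lemma volume_cyl (hR : 0 < R) :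
    volume (cyl d R t x) = ENNReal.ofReal (R ^ (d + 2)) * volume (ball (0 : Spc d) 1) := by
  rw [cyl, Measure.volume_eq_prod, Measure.prod_prod, Real.volume_Ioo,
    Measure.addHaar_ball_of_pos _ _ hR, finrank_euclideanSpace_fin, ← mul_assoc,
    ← ENNReal.ofReal_mul (by nlinarith)]
  ring_nf

lemma volume_cyl_ne_zero (hR : 0 < R) : volume (cyl d R t x) ≠ 0 := by
  rw [volume_cyl hR]
  exact mul_ne_zero (ENNReal.ofReal_pos.mpr (by positivity)).ne'
    (measure_ball_pos _ _ one_pos).ne'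

lemma volume_cyl_ne_top (hR : 0 < R) : volume (cyl d R t x) ≠ ⊤ := by
  rw [volume_cyl hR]
  exact ENNReal.mul_ne_top ENNReal.ofReal_ne_top measure_ball_lt_top.ne

lemma setLIntegral_cyl_le_maxF (g : Pt d → ℝ) (hR : 0 < R) {z : Pt d} (hz : z ∈ cyl d R t x) :
    ∫⁻ w in cyl d R t x, ENNReal.ofReal (g w) ≤ volume (cyl d R t x) * maxF 0 g z := by
  have hle : ENNReal.ofReal (R ^ (0 : ℝ)) * aveLin (cyl d R t x) g ≤ maxF 0 g z :=
    le_iSup_of_le R (le_iSup_of_le hR (le_iSup_of_le t (le_iSup_of_le x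
      (le_iSup_of_le hz le_rfl))))
  rw [Real.rpow_zero, ENNReal.ofReal_one, one_mul, aveLin] at hle
  rwa [← ENNReal.inv_mul_le_iff (volume_cyl_ne_zero hR) (volume_cyl_ne_top hR)]

lemma continuous_prho : Continuous (prho (d := d)) := by
  unfold prho
  fun_prop

lemma setOf_prho_lt_subset_cyl (S : ℝ) :
    {w : Pt d | prho w < S} ⊆ cyl d (2 * S) (-S ^ 2) 0 := by
  intro w (hw : ‖w.2‖ + √|w.1| < S)
  have hS : 0 < S := (by positivity : 0 ≤ ‖w.2‖ + √|w.1|).trans_lt hw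
  have htime : |w.1| < S ^ 2 :=
    (Real.sqrt_lt' hS).mp (by linarith [norm_nonneg w.2])
  have hspace : ‖w.2‖ < S := by linarith [Real.sqrt_nonneg |w.1|]
  refine ⟨⟨(abs_lt.mp htime).1, ?_⟩, ?_⟩
  · nlinarith [(abs_lt.mp htime).2]
  · rw [mem_ball_zero_iff]
    linarith

lemma setLIntegral_prho_lt_le_maxF (g : Pt d → ℝ) {S : ℝ} (hS : 0 < S) :
    ∫⁻ w in {w | prho w < S}, ENNReal.ofReal (g w) ≤
      ENNReal.ofReal ((2 * S) ^ (d + 2)) * volume (ball (0 : Spc d) 1) * maxF 0 g (0, 0) := by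
  rw [← volume_cyl (t := -S ^ 2) (x := 0) (by positivity : 0 < 2 * S)]
  refine (lintegral_mono_set (setOf_prho_lt_subset_cyl S)).trans
    (setLIntegral_cyl_le_maxF g (by positivity) (setOf_prho_lt_subset_cyl S ?_))
  simpa [prho] using hS

lemma lintegral_Ioi_inv_pow {r : ℝ} (hr : 0 < r) {n : ℕ} (hn : n ≠ 0) :
    ∫⁻ S in Ioi r, ENNReal.ofReal (S ^ (n + 1))⁻¹ = ENNReal.ofReal (n * r ^ n)⁻¹ := by
  have hexp : (-((n + 1 : ℕ) : ℝ)) < -1 := by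
    have : (0 : ℝ) < n := by exact_mod_cast hn.bot_lt
    push_cast
    linarith
  have hrpow : EqOn (fun S : ℝ => S ^ (-((n + 1 : ℕ) : ℝ))) (fun S => (S ^ (n + 1))⁻¹) (Ioi r) :=
    fun S hS => by simp only [Real.rpow_neg (hr.trans hS).le, Real.rpow_natCast]
  rw [← ofReal_integral_eq_lintegral_ofReal
      ((integrableOn_Ioi_rpow_of_lt hexp hr).congr_fun hrpow measurableSet_Ioi)
      ((ae_restrict_mem measurableSet_Ioi).mono fun S hS =>
        inv_nonneg.mpr (pow_nonneg (hr.trans hS).le _)),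
    ← setIntegral_congr_fun measurableSet_Ioi hrpow, integral_Ioi_rpow_of_lt hexp hr]
  congr 1
  rw [show (-((n + 1 : ℕ) : ℝ)) + 1 = -(n : ℝ) by push_cast; ring, Real.rpow_neg hr.le,
    Real.rpow_natCast]
  field_simp

lemma setLIntegral_mul_inv_pow_le {X : Type*} [MeasurableSpace X] {μ : Measure X} [SFinite μ]
    {r : X → ℝ} (hr : Measurable r) {G : X → ℝ≥0∞} (hG : Measurable G) (hR : 0 < R) {n : ℕ}
    (hn : n ≠ 0) :
    ∫⁻ w in {w | R ≤ r w}, G w * ENNReal.ofReal (n * r w ^ n)⁻¹ ∂μ ≤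
      ∫⁻ S in Ioi R, ENNReal.ofReal (S ^ (n + 1))⁻¹ * ∫⁻ w in {w | r w < S}, G w ∂μ := by
  let φ : X → ℝ → ℝ≥0∞ := fun w =>
    (Ioi (r w)).indicator fun S => ENNReal.ofReal (S ^ (n + 1))⁻¹ * G w
  have hφ : Measurable (Function.uncurry φ) :=
    Measurable.indicator (f := fun p : X × ℝ => ENNReal.ofReal (p.2 ^ (n + 1))⁻¹ * G p.1)
      (by fun_prop) (measurableSet_lt (hr.comp measurable_fst) measurable_snd)
  have hφ_left : ∀ w ∈ {w | R ≤ r w},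
      G w * ENNReal.ofReal (n * r w ^ n)⁻¹ = ∫⁻ S in Ioi R, φ w S := fun w (hw : R ≤ r w) => by
    rw [setLIntegral_indicator measurableSet_Ioi, inter_eq_left.mpr (Ioi_subset_Ioi hw),
      lintegral_mul_const _ (by fun_prop), lintegral_Ioi_inv_pow (hR.trans_le hw) hn, mul_comm]
  have hφ_right : ∀ S, ∫⁻ w, φ w S ∂μ =
      ENNReal.ofReal (S ^ (n + 1))⁻¹ * ∫⁻ w in {w | r w < S}, G w ∂μ := fun S => by
    rw [← lintegral_const_mul _ hG, ← lintegral_indicator (measurableSet_lt hr measurable_const)]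
    rfl
  rw [setLIntegral_congr_fun (measurableSet_le measurable_const hr) hφ_left,
    lintegral_lintegral_swap hφ.aemeasurable]
  exact lintegral_mono fun S => (setLIntegral_le_lintegral _ _).trans_eq (hφ_right S)

lemma setLIntegral_mul_inv_prho_pow_le_maxF {g : Pt d → ℝ} (hg : Measurable g) (hR : 0 < R) :
    ∫⁻ w in {w | R ≤ prho w}, ENNReal.ofReal (g w) * ENNReal.ofReal (prho w ^ (d + 3))⁻¹ ≤
      ENNReal.ofReal ((d + 3) * 2 ^ (d + 2) / R) * volume (ball (0 : Spc d) 1) *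
        maxF 0 g (0, 0) := by
  have hscale : ∀ w : Pt d, ENNReal.ofReal (prho w ^ (d + 3))⁻¹ =
      ENNReal.ofReal (d + 3) * ENNReal.ofReal ((d + 3 : ℕ) * prho w ^ (d + 3))⁻¹ := fun w => by
    rw [← ENNReal.ofReal_mul (by positivity)]
    push_cast
    field_simp
  simp only [hscale, mul_left_comm (ENNReal.ofReal (g _)) (ENNReal.ofReal (d + 3))]
  rw [lintegral_const_mul' _ _ ENNReal.ofReal_ne_top]
  have hcancel : ∀ S ∈ Ioi R, ENNReal.ofReal (S ^ (d + 3 + 1))⁻¹ *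
      (ENNReal.ofReal ((2 * S) ^ (d + 2)) * volume (ball (0 : Spc d) 1) * maxF 0 g (0, 0)) =
      ENNReal.ofReal (S ^ (1 + 1))⁻¹ *
        (ENNReal.ofReal (2 ^ (d + 2)) * volume (ball (0 : Spc d) 1) * maxF 0 g (0, 0)) :=
    fun S (hS : R < S) => by
      have hS0 : 0 < S := hR.trans hS
      rw [mul_assoc, mul_assoc, ← mul_assoc, ← mul_assoc (ENNReal.ofReal (S ^ (1 + 1))⁻¹),
        ← ENNReal.ofReal_mul (by positivity), ← ENNReal.ofReal_mul (by positivity)]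
      congr 2
      field_simp
      ring
  calc _ ≤ ENNReal.ofReal (d + 3) * ∫⁻ S in Ioi R, ENNReal.ofReal (S ^ (d + 3 + 1))⁻¹ *
        (ENNReal.ofReal ((2 * S) ^ (d + 2)) * volume (ball (0 : Spc d) 1) * maxF 0 g (0, 0)) := by
        gcongr
        refine (setLIntegral_mul_inv_pow_le continuous_prho.measurable hg.ennreal_ofReal hR
          (by lia)).trans (setLIntegral_mono' measurableSet_Ioi fun S hS => ?_)
        gcongr
        exact setLIntegral_prho_lt_le_maxF g (hR.trans hS)
    _ = _ := by
        rw [setLIntegral_congr_fun measurableSet_Ioi hcancel,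
          lintegral_mul_const _ (by fun_prop), lintegral_Ioi_inv_pow hR one_ne_zero,
          ← mul_assoc, ← mul_assoc, ← mul_assoc, ← ENNReal.ofReal_mul (by positivity),
          ← ENNReal.ofReal_mul (by positivity)]
        congr 3
        rw [Nat.cast_one, one_mul, pow_one, div_eq_mul_inv]
        ring

end MaximalFunction

section MeanOscillation

variable {X E : Type*} [MeasurableSpace X] {P : Measure X} [NormedAddCommGroup E]

/-- The mean oscillation of `f` with respect to a probability measure `P`, as an extended
nonnegative real. -/
def meanOsc (P : Measure X) (f : X → E) : ℝ≥0∞ :=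
  ∫⁻ z, ∫⁻ z', ‖f z - f z'‖ₑ ∂P ∂P

lemma meanOsc_neg (P : Measure X) (f : X → E) : meanOsc P (-f) = meanOsc P f := by
  simp only [meanOsc, Pi.neg_apply, ← neg_sub', enorm_neg]

lemma meanOsc_ofReal (P : Measure X) (f : X → ℝ) :
    meanOsc P (fun z => (f z : ℂ)) = meanOsc P f := by
  simp only [meanOsc, ← Complex.ofReal_sub, ← ofReal_norm, Complex.norm_real]

lemma meanOsc_le_of_forall_enorm_sub_le [IsProbabilityMeasure P] {f : X → E} {w : X → ℝ≥0∞}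
    {B : ℝ≥0∞} {s : Set X} (hs : ∀ᵐ z ∂P, z ∈ s)
    (h : ∀ z ∈ s, ∀ z' ∈ s, ‖f z - f z'‖ₑ ≤ w z + w z' + B) :
    meanOsc P f ≤ 2 * ∫⁻ z, w z ∂P + B := by
  calc meanOsc P f ≤ ∫⁻ z, ∫⁻ z', (w z + w z' + B) ∂P ∂P :=
        lintegral_mono_ae (hs.mono fun z hz => lintegral_mono_ae (hs.mono fun z' => h z hz z'))
    _ = ∫⁻ z, (w z + (∫⁻ z', w z' ∂P + B)) ∂P := by
        refine lintegral_congr fun z => ?_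
        rw [lintegral_add_right _ measurable_const, lintegral_add_left measurable_const]
        simp [add_assoc]
    _ = 2 * ∫⁻ z, w z ∂P + B := by
        rw [lintegral_add_right _ measurable_const]
        simp [two_mul, add_assoc]

lemma setAverage_eq_integral_cond [NormedSpace ℝ E] (μ : Measure X) (s : Set X) (f : X → E) :
    ⨍ z in s, f z ∂μ = ∫ z, f z ∂ProbabilityTheory.cond μ s := by
  rw [average, Measure.restrict_apply_univ, ProbabilityTheory.cond]

variable [MeasurableSpace E]

lemma measurable_enorm_fst_sub_snd [OpensMeasurableSpace E] [MeasurableSub₂ E] {f : X → E}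
    (hf : Measurable f) : Measurable fun p : X × X => ‖f p.1 - f p.2‖ₑ :=
  ((hf.comp measurable_fst).sub (hf.comp measurable_snd)).enorm

lemma meanOsc_le_of_tendsto [OpensMeasurableSpace E] [MeasurableSub₂ E] [SFinite P] {ι : Type*}
    {F : Filter ι} [F.NeBot] [F.IsCountablyGenerated] {f : ι → X → E} {g : X → E} {B : ℝ≥0∞}
    (hf : ∀ n, Measurable (f n)) (hlim : ∀ z, Filter.Tendsto (fun n => f n z) F (nhds (g z)))
    (hB : ∀ᶠ n in F, meanOsc P (f n) ≤ B) : meanOsc P g ≤ B := by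
  calc meanOsc P g = ∫⁻ z, ∫⁻ z', Filter.liminf (fun n => ‖f n z - f n z'‖ₑ) F ∂P ∂P :=
        lintegral_congr fun z => lintegral_congr fun z' =>
          ((hlim z).sub (hlim z')).enorm.liminf_eq.symm
    _ ≤ ∫⁻ z, Filter.liminf (fun n => ∫⁻ z', ‖f n z - f n z'‖ₑ ∂P) F ∂P :=
        lintegral_mono fun z => lintegral_liminf_le fun n => ((hf n).const_sub (f n z)).enorm
    _ ≤ Filter.liminf (fun n => meanOsc P (f n)) F :=
        lintegral_liminf_le fun n => (measurable_enorm_fst_sub_snd (hf n)).lintegral_prod_right'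
    _ ≤ Filter.liminf (fun _ => B) F := Filter.liminf_le_liminf hB
    _ = B := Filter.liminf_const B

lemma mnorm_le_sum_sum_abs {d : ℕ} (m : Fin d → Fin d → ℝ) : mnorm m ≤ ∑ i, ∑ j, |m i j| := by
  rw [mnorm, Real.sqrt_le_left (by positivity)]
  simp only [← Finset.sum_product']
  simpa only [sq_abs] using Finset.sum_sq_le_sq_sum_of_nonneg
    (s := Finset.univ ×ˢ Finset.univ) (f := fun p : Fin d × Fin d => |m p.1 p.2|)
    fun _ _ => abs_nonneg _

lemma enorm_mnorm_le_sum_sum_enorm {d : ℕ} (m : Fin d → Fin d → ℝ) :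
    ‖mnorm m‖ₑ ≤ ∑ i, ∑ j, ‖m i j‖ₑ := by
  simp only [Real.enorm_eq_ofReal_abs, mnorm, abs_of_nonneg (Real.sqrt_nonneg _)]
  refine (ENNReal.ofReal_le_ofReal (mnorm_le_sum_sum_abs m)).trans_eq ?_
  rw [ENNReal.ofReal_sum_of_nonneg fun i _ => by positivity]
  exact Finset.sum_congr rfl fun i _ => ENNReal.ofReal_sum_of_nonneg fun j _ => abs_nonneg _

lemma ofReal_oscC_le_sum_meanOsc {d : ℕ} (C : Set (Pt d)) {g : Pt d → Fin d → Fin d → ℝ}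
    (hg : ∀ i j, Measurable fun z => g z i j) :
    ENNReal.ofReal (oscC C g) ≤
      ∑ i, ∑ j, meanOsc (ProbabilityTheory.cond volume C) fun z => g z i j := by
  set P := ProbabilityTheory.cond volume C with hP
  have hpair := fun i j => measurable_enorm_fst_sub_snd (hg i j)
  simp only [oscC, setAverage_eq_integral_cond, ← hP]
  calc _ ≤ ∫⁻ z, ∫⁻ z', ∑ i, ∑ j, ‖g z i j - g z' i j‖ₑ ∂P ∂P :=
        (Real.ofReal_le_enorm _).trans ((enorm_integral_le_lintegral_enorm _).trans
          (lintegral_mono fun z => (enorm_integral_le_lintegral_enorm _).trans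
            (lintegral_mono fun z' => enorm_mnorm_le_sum_sum_enorm _)))
    _ = ∫⁻ z, ∑ i, ∑ j, ∫⁻ z', ‖g z i j - g z' i j‖ₑ ∂P ∂P := by
        refine lintegral_congr fun z => ?_
        rw [lintegral_finsetSum _ fun i _ => Finset.measurable_fun_sum _ fun j _ =>
          ((hg i j).const_sub (g z i j)).enorm]
        exact Finset.sum_congr rfl fun i _ => lintegral_finsetSum _ fun j _ =>
          ((hg i j).const_sub (g z i j)).enorm
    _ = ∑ i, ∑ j, meanOsc P fun z => g z i j := by
        rw [lintegral_finsetSum _ fun i _ => Finset.measurable_fun_sum _ fun j _ =>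
          (hpair i j).lintegral_prod_right']
        exact Finset.sum_congr rfl fun i _ => lintegral_finsetSum _ fun j _ =>
          (hpair i j).lintegral_prod_right'

end MeanOscillation

section HessianEstimate

set_option maxSynthPendingDepth 3

variable {X : Type*} [MeasurableSpace X] {μ : Measure X} {s : Set X}

lemma sq_lintegral_cond_le (hs₀ : μ s ≠ 0) (hs : μ s ≠ ⊤) {f : X → ℝ≥0∞} (hf : Measurable f) :
    (∫⁻ x, f x ∂ProbabilityTheory.cond μ s) ^ 2 ≤ (μ s)⁻¹ * ∫⁻ x, f x ^ 2 ∂μ := by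
  have := ProbabilityTheory.cond_isProbabilityMeasure_of_finite hs₀ hs
  calc _ ≤ ∫⁻ x, f x ^ 2 ∂ProbabilityTheory.cond μ s := by
        simpa using sq_lintegral_mul_le (μ := ProbabilityTheory.cond μ s) hf.aemeasurable
          (aemeasurable_const (b := 1))
    _ ≤ (μ s)⁻¹ * ∫⁻ x, f x ^ 2 ∂μ := by
        rw [ProbabilityTheory.cond, lintegral_smul_measure, smul_eq_mul]
        gcongr
        exact Measure.restrict_le_self

lemma lintegral_enorm_sq_indicator_eq_mul_setAverage {E : Type*} [NormedAddCommGroup E]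
    (hsm : MeasurableSet s) (hs₀ : μ s ≠ 0) (hs : μ s ≠ ⊤) {f : X → E} (hf : MemLp f 2 μ) :
    ∫⁻ x, ‖s.indicator f x‖ₑ ^ 2 ∂μ = μ s * ENNReal.ofReal (⨍ x in s, ‖f x‖ ^ 2 ∂μ) := by
  rw [ofReal_setAverage (hf.restrict s).norm.integrable_sq (.of_forall fun x => sq_nonneg _),
    ENNReal.mul_div_cancel hs₀ hs, ← lintegral_indicator hsm]
  refine lintegral_congr fun x => ?_
  by_cases hx : x ∈ s <;> simp [hx]

variable {d : ℕ} {a : ℝ → Spc d →L[ℝ] Spc d →L[ℝ] ℝ} {l u ε ρ κ : ℝ} {e e' : Spc d}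
  {g : Pt d → ℂ}

lemma volume_cyl_mul (hκ : 0 < κ) (hρ : 0 < ρ) :
    volume (cyl d (κ * ρ) 0 0) = ENNReal.ofReal (κ ^ (d + 2)) * volume (cyl d ρ 0 0) := by
  rw [volume_cyl (by positivity), volume_cyl hρ, mul_pow, ENNReal.ofReal_mul (by positivity),
    mul_assoc]

lemma IsEllipticFamily.lintegral_enorm_potential_indicator_cyl_le (hl : 0 < l)
    (ha : IsEllipticFamily l u a) (hε : 0 < ε) (he : ‖e‖ ≤ 1) (he' : ‖e'‖ ≤ 1)
    (hgm : Measurable g) (hg : Integrable g) (hg₂ : MemLp g 2) (hκ : 0 < κ) (hρ : 0 < ρ) :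
    ∫⁻ z, ‖potential a ε e e' ((cyl d (κ * ρ) 0 0).indicator g) z‖ₑ
        ∂ProbabilityTheory.cond volume (cyl d ρ 0 0) ≤
      ENNReal.ofReal (l⁻¹ * κ ^ (((d : ℝ) + 2) / 2) *
        √(⨍ z in cyl d (κ * ρ) 0 0, ‖g z‖ ^ 2)) := by
  set Q := cyl d (κ * ρ) 0 0
  set A : ℝ := ⨍ z in Q, ‖g z‖ ^ 2
  have hA : 0 ≤ A := integral_nonneg fun z => by positivity
  have hQ : MeasurableSet Q := measurableSet_cyl
  have hgQ : Measurable (Q.indicator g) := hgm.indicator hQ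
  have hL2 : ∫⁻ w, ‖Q.indicator g w‖ₑ ^ 2 =
      ENNReal.ofReal (κ ^ (d + 2)) * volume (cyl d ρ 0 0) * ENNReal.ofReal A := by
    rw [← volume_cyl_mul hκ hρ, lintegral_enorm_sq_indicator_eq_mul_setAverage hQ
      (volume_cyl_ne_zero (by positivity)) (volume_cyl_ne_top (by positivity)) hg₂]
  have hpow : (κ ^ (((d : ℝ) + 2) / 2)) ^ 2 = κ ^ (d + 2) := by
    rw [← Real.rpow_mul_natCast hκ.le, ← Real.rpow_natCast]
    push_cast
    ring_nf
  rw [← ENNReal.pow_le_pow_left_iff two_ne_zero]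
  calc _ ≤ (volume (cyl d ρ 0 0))⁻¹ * ∫⁻ z, ‖potential a ε e e' (Q.indicator g) z‖ₑ ^ 2 :=
        sq_lintegral_cond_le (volume_cyl_ne_zero hρ) (volume_cyl_ne_top hρ)
          (ha.measurable_potential hl hε he he' hgQ (hg.indicator hQ)).enorm
    _ ≤ (volume (cyl d ρ 0 0))⁻¹ *
          (ENNReal.ofReal l⁻¹ ^ 2 * ∫⁻ w, ‖Q.indicator g w‖ₑ ^ 2) := by
        gcongr
        exact ha.lintegral_enorm_sq_potential_le hl hε he he' hgQ (hg.indicator hQ)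
    _ = (volume (cyl d ρ 0 0))⁻¹ * volume (cyl d ρ 0 0) * (ENNReal.ofReal l⁻¹ ^ 2 *
          (ENNReal.ofReal (κ ^ (d + 2)) * ENNReal.ofReal A)) := by
        rw [hL2]
        ring
    _ = _ := by
        rw [ENNReal.inv_mul_cancel (volume_cyl_ne_zero hρ) (volume_cyl_ne_top hρ), one_mul,
          ← ENNReal.ofReal_pow (by positivity), ← ENNReal.ofReal_pow (by positivity), mul_pow,
          mul_pow, hpow, Real.sq_sqrt hA, mul_assoc, ENNReal.ofReal_mul (by positivity),
          ENNReal.ofReal_mul (by positivity)]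

lemma cyl_subset_cyl {R S : ℝ} (hR : 0 ≤ R) (hRS : R ≤ S) : cyl d R 0 0 ⊆ cyl d S 0 0 :=
  prod_mono (Ioo_subset_Ioo_right (by gcongr)) (ball_subset_ball hRS)

lemma le_prho_of_notMem_cyl {R : ℝ} (hR : 0 ≤ R) {w : Pt d} (hw₀ : 0 < w.1)
    (hw : w ∉ cyl d R 0 0) : R ≤ prho w := by
  by_contra! hlt
  have htime : |w.1| < R ^ 2 := by
    rw [← Real.sqrt_lt' (lt_of_le_of_ne hR ?_)]
    · exact (le_add_of_nonneg_left (norm_nonneg _)).trans_lt hlt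
    · rintro rfl
      exact hlt.not_ge (by unfold prho; positivity)
  have hspace : ‖w.2‖ < R := (le_add_of_nonneg_right (Real.sqrt_nonneg _)).trans_lt hlt
  exact hw ⟨⟨hw₀, by simpa using (le_abs_self _).trans_lt htime⟩, mem_ball_zero_iff.mpr hspace⟩

lemma exists_enorm_parabolicKernel_sub_le (d : ℕ) (hl : 0 < l) (u : ℝ) :
    ∃ C : ℝ, 0 ≤ C ∧ ∀ {a : ℝ → Spc d →L[ℝ] Spc d →L[ℝ] ℝ}, IsEllipticFamily l u a →
      ∀ {e e' : Spc d}, ‖e‖ ≤ 1 → ‖e'‖ ≤ 1 → ∀ {ε ρ κ : ℝ}, 0 < ε → ε ≤ ρ ^ 2 → 0 < ρ → 2 ≤ κ →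
      ∀ z ∈ cyl d ρ 0 0, ∀ z' ∈ cyl d ρ 0 0, ∀ w ∉ cyl d (κ * ρ) 0 0,
        ‖parabolicKernel a ε z w ![e, e'] - parabolicKernel a ε z' w ![e, e']‖ₑ ≤
          {w | κ * ρ ≤ prho w}.indicator
            (fun w => ENNReal.ofReal (C * ρ) * ENNReal.ofReal (prho w ^ (d + 3))⁻¹) w := by
  obtain ⟨C, hC, hker⟩ := exists_norm_parabolicKernel_sub_le (V := Spc d) hl u
  refine ⟨C, hC, fun {a} ha {e e'} he he' {ε ρ κ} hε hερ hρ hκ z hz z' hz' w hw => ?_⟩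
  rcases le_or_gt w.1 0 with hw₀ | hw₀
  · rw [parabolicKernel_of_le a ε (hw₀.trans hz.1.1.le),
      parabolicKernel_of_le a ε (hw₀.trans hz'.1.1.le)]
    simp
  · have hwρ : w ∈ {w : Pt d | κ * ρ ≤ prho w} := le_prho_of_notMem_cyl (by positivity) hw₀ hw
    rw [indicator_of_mem hwρ, ← ENNReal.ofReal_mul (by positivity), ← ofReal_norm]
    refine ENNReal.ofReal_le_ofReal ?_
    have hw₂ : w ∉ cyl d (2 * ρ) 0 0 := fun h =>
      hw (cyl_subset_cyl (by positivity) (by gcongr) h)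
    simp only [cyl, zero_add] at hz hz' hw₂
    have hbound := hker ha hε hερ hz hz' hw₂
    rw [finrank_euclideanSpace_fin, div_eq_mul_inv] at hbound
    exact (ContinuousMultilinearMap.unit_le_opNorm _ (pi_norm_le_iff_of_nonneg zero_le_one |>.mpr
      (by simp [Fin.forall_fin_two, he, he']))).trans hbound

lemma exists_enorm_potential_compl_cyl_sub_le (d : ℕ) (hl : 0 < l) (u : ℝ) :
    ∃ C : ℝ, 0 ≤ C ∧ ∀ {a : ℝ → Spc d →L[ℝ] Spc d →L[ℝ] ℝ}, IsEllipticFamily l u a →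
      ∀ {e e' : Spc d}, ‖e‖ ≤ 1 → ‖e'‖ ≤ 1 → ∀ {ε ρ κ : ℝ}, 0 < ε → ε ≤ ρ ^ 2 → 0 < ρ → 2 ≤ κ →
      ∀ {g : Pt d → ℂ}, Measurable g → Integrable g →
      ∀ z ∈ cyl d ρ 0 0, ∀ z' ∈ cyl d ρ 0 0,
        ‖potential a ε e e' ((cyl d (κ * ρ) 0 0)ᶜ.indicator g) z -
            potential a ε e e' ((cyl d (κ * ρ) 0 0)ᶜ.indicator g) z'‖ₑ ≤
          ENNReal.ofReal (C * κ⁻¹) * maxF 0 (fun z => ‖g z‖) (0, 0) := by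
  obtain ⟨C, hC, hker⟩ := exists_enorm_parabolicKernel_sub_le d hl u
  set c := volume (ball (0 : Spc d) 1)
  have hc_top : c ≠ ⊤ := measure_ball_lt_top.ne
  refine ⟨C * ((d + 3) * 2 ^ (d + 2)) * c.toReal, by positivity,
    fun {a} ha {e e'} he he' {ε ρ κ} hε hερ hρ hκ {g} hgm hg z hz z' hz' => ?_⟩
  have hκ₀ : 0 < κ := by linarith
  have hgQ : Integrable ((cyl d (κ * ρ) 0 0)ᶜ.indicator g) := hg.indicator measurableSet_cyl.compl
  have hS : MeasurableSet {w : Pt d | κ * ρ ≤ prho w} :=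
    measurableSet_le measurable_const continuous_prho.measurable
  rw [potential, potential, ← integral_sub (ha.integrable_kernel_mul hl hε he he' hgQ z)
    (ha.integrable_kernel_mul hl hε he he' hgQ z')]
  calc _ ≤ ∫⁻ w, {w : Pt d | κ * ρ ≤ prho w}.indicator (fun w => ENNReal.ofReal (C * ρ) *
          (ENNReal.ofReal ‖g w‖ * ENNReal.ofReal (prho w ^ (d + 3))⁻¹)) w := by
        refine (enorm_integral_le_lintegral_enorm _).trans (lintegral_mono fun w => ?_)
        by_cases hw : w ∈ cyl d (κ * ρ) 0 0
        · simp [hw]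
        · rw [indicator_of_mem (mem_compl hw), ← sub_mul, enorm_mul]
          refine (mul_le_mul_left (hker ha he he' hε hερ hρ hκ z hz z' hz' w hw) _).trans_eq ?_
          by_cases hwS : w ∈ {w : Pt d | κ * ρ ≤ prho w}
          · rw [indicator_of_mem hwS, indicator_of_mem hwS, ofReal_norm]
            ring
          · rw [indicator_of_notMem hwS, indicator_of_notMem hwS, zero_mul]
    _ = ENNReal.ofReal (C * ρ) * ∫⁻ w in {w : Pt d | κ * ρ ≤ prho w},
          ENNReal.ofReal ‖g w‖ * ENNReal.ofReal (prho w ^ (d + 3))⁻¹ := by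
        rw [lintegral_indicator hS, lintegral_const_mul' _ _ ENNReal.ofReal_ne_top]
    _ ≤ ENNReal.ofReal (C * ρ) * (ENNReal.ofReal ((d + 3) * 2 ^ (d + 2) / (κ * ρ)) * c *
          maxF 0 (fun z => ‖g z‖) (0, 0)) := by
        gcongr
        exact setLIntegral_mul_inv_prho_pow_le_maxF hgm.norm (mul_pos hκ₀ hρ)
    _ = _ := by
        rw [← ENNReal.ofReal_toReal hc_top, ← mul_assoc, ← ENNReal.ofReal_mul (by positivity),
          ← ENNReal.ofReal_mul (by positivity)]
        congr 2
        rw [ENNReal.ofReal_toReal hc_top]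
        field_simp

lemma exists_meanOsc_potential_le (d : ℕ) (hl : 0 < l) (u : ℝ) :
    ∃ C : ℝ, 0 ≤ C ∧ ∀ {a : ℝ → Spc d →L[ℝ] Spc d →L[ℝ] ℝ}, IsEllipticFamily l u a →
      ∀ {e e' : Spc d}, ‖e‖ ≤ 1 → ‖e'‖ ≤ 1 → ∀ {ε ρ κ : ℝ}, 0 < ε → ε ≤ ρ ^ 2 → 0 < ρ → 2 ≤ κ →
      ∀ {g : Pt d → ℂ}, Measurable g → Integrable g → MemLp g 2 →
        meanOsc (ProbabilityTheory.cond volume (cyl d ρ 0 0)) (potential a ε e e' g) ≤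
          2 * ENNReal.ofReal (l⁻¹ * κ ^ (((d : ℝ) + 2) / 2) *
            √(⨍ z in cyl d (κ * ρ) 0 0, ‖g z‖ ^ 2)) +
          ENNReal.ofReal (C * κ⁻¹) * maxF 0 (fun z => ‖g z‖) (0, 0) := by
  obtain ⟨C, hC, hfar⟩ := exists_enorm_potential_compl_cyl_sub_le d hl u
  refine ⟨C, hC, fun {a} ha {e e'} he he' {ε ρ κ} hε hερ hρ hκ {g} hgm hg hg₂ => ?_⟩
  have := ProbabilityTheory.cond_isProbabilityMeasure_of_finite
    (volume_cyl_ne_zero (d := d) (t := 0) (x := 0) hρ) (volume_cyl_ne_top hρ)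
  set Q := cyl d (κ * ρ) 0 0
  have hQ : MeasurableSet Q := measurableSet_cyl
  have hsplit : ∀ z, potential a ε e e' g z =
      potential a ε e e' (Q.indicator g) z + potential a ε e e' (Qᶜ.indicator g) z := fun z => by
    rw [← ha.potential_add hl hε he he' (hg.indicator hQ) (hg.indicator hQ.compl),
      indicator_self_add_compl]
  refine (meanOsc_le_of_forall_enorm_sub_le
    (w := fun z => ‖potential a ε e e' (Q.indicator g) z‖ₑ)
    (B := ENNReal.ofReal (C * κ⁻¹) * maxF 0 (fun z => ‖g z‖) (0, 0))
    (ProbabilityTheory.ae_cond_mem measurableSet_cyl) fun z hz z' hz' => ?_).trans ?_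
  · rw [hsplit, hsplit, add_sub_add_comm]
    exact (enorm_add_le _ _).trans (add_le_add (enorm_sub_le)
      (hfar ha he he' hε hερ hρ hκ hgm hg z hz z' hz'))
  · gcongr
    exact ha.lintegral_enorm_potential_indicator_cyl_le hl hε he he' hgm hg hg₂ (by linarith) hρ

lemma exists_meanOsc_dirDeriv_dirDeriv_le (d : ℕ) (hl : 0 < l) (u : ℝ) :
    ∃ C : ℝ, 0 ≤ C ∧ ∀ {a : ℝ → Spc d →L[ℝ] Spc d →L[ℝ] ℝ}, IsEllipticFamily l u a →
      (∀ e e', Measurable fun t => a t e e') →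
      ∀ {ι : Type} [Fintype ι] (b : OrthonormalBasis ι ℝ (Spc d)) {e e' : Spc d}, ‖e‖ ≤ 1 →
      ‖e'‖ ≤ 1 → ∀ {U : Pt d → ℂ}, IsTestFunction U → ∀ {ρ κ : ℝ}, 0 < ρ → 2 ≤ κ →
        meanOsc (ProbabilityTheory.cond volume (cyl d ρ 0 0))
            (dirDeriv (0, e) (dirDeriv (0, e') U)) ≤
          2 * ENNReal.ofReal (l⁻¹ * κ ^ (((d : ℝ) + 2) / 2) *
            √(⨍ z in cyl d (κ * ρ) 0 0, ‖parabolicOp b a U z‖ ^ 2)) +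
          ENNReal.ofReal (C * κ⁻¹) * maxF 0 (fun z => ‖parabolicOp b a U z‖) (0, 0) := by
  obtain ⟨C, hC, hosc⟩ := exists_meanOsc_potential_le d hl u
  refine ⟨C, hC, fun {a} ha ham {ι} _ b {e e'} he he' {U} hU {ρ κ} hρ hκ => ?_⟩
  have hm := measurable_parabolicOp b ham hU
  have hinteg := ha.integrable_parabolicOp b ham hU
  have hpos : ∀ n : ℕ, 0 < 1 / ((n : ℝ) + 1) := fun n => by positivity
  have hlim := tendsto_one_div_add_atTop_nhds_zero_nat (𝕜 := ℝ)
  rw [← meanOsc_neg]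
  refine meanOsc_le_of_tendsto (F := Filter.atTop)
    (fun n : ℕ => ha.measurable_potential hl (hpos n) he he' hm hinteg)
    (fun z => (ha.tendsto_potential_parabolicOp b hl ham he he' hU z).comp
      (tendsto_nhdsWithin_iff.mpr ⟨hlim, .of_forall hpos⟩)) ?_
  filter_upwards [hlim.eventually_le_const (by positivity : 0 < ρ ^ 2)] with n hn
  exact hosc ha he he' (hpos n) hn hρ hκ hm hinteg (ha.memLp_parabolicOp b ham hU 2)

end HessianEstimate

lemma exists_meanOsc_Dxx_le (d : ℕ) {δ : ℝ} (hδ : 0 < δ) :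
    ∃ N : ℝ, 0 < N ∧ ∀ {a : ℝ → Matrix (Fin d) (Fin d) ℝ}, Measurable a → (∀ t, inS d δ (a t)) →
      ∀ {u : Pt d → ℝ}, CinfC u → ∀ {κ : ℝ}, 2 ≤ κ → ∀ {ρ : ℝ}, 0 < ρ → ∀ i j,
        meanOsc (ProbabilityTheory.cond volume (cyl d ρ 0 0)) (Dxx i j u) ≤
          ENNReal.ofReal (N * κ ^ (((d : ℝ) + 2) / 2) *
            √(⨍ z in cyl d (κ * ρ) 0 0, (Dt u z + ∑ i, ∑ j, a z.1 i j * Dxx i j u z) ^ 2)) +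
          ENNReal.ofReal (N * κ⁻¹) *
            maxF 0 (fun z => |Dt u z + ∑ i, ∑ j, a z.1 i j * Dxx i j u z|) (0, 0) := by
  obtain ⟨C, hC, hosc⟩ := exists_meanOsc_dirDeriv_dirDeriv_le d hδ δ⁻¹
  refine ⟨2 * δ⁻¹ + C, by positivity, fun {a} ha haS {u} hu {κ} hκ {ρ} hρ i j => ?_⟩
  have hentry := hosc (isEllipticFamily_matrixForm hδ ha haS) (measurable_matrixForm_apply_apply ha)
    (EuclideanSpace.basisFun (Fin d) ℝ) (e := EuclideanSpace.single i 1)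
    (e' := EuclideanSpace.single j 1) (by simp) (by simp) hu.isTestFunction hρ hκ
  rw [← funext (hu.ofReal_Dxx i j), meanOsc_ofReal, ← funext (hu.ofReal_parabolicOp a)] at hentry
  simp only [Complex.norm_real, Real.norm_eq_abs, sq_abs] at hentry
  refine hentry.trans ?_
  have htwo (x : ℝ) : 2 * ENNReal.ofReal x = ENNReal.ofReal (2 * x) := by
    rw [ENNReal.ofReal_mul zero_le_two, ENNReal.ofReal_ofNat]
  rw [htwo, ← mul_assoc, ← mul_assoc]
  gcongr
  · exact le_add_of_nonneg_right hC
  · exact le_add_of_nonneg_left (by positivity)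

theorem stmt5 (d : ℕ) (hd : 1 ≤ d) (δ : ℝ) (hδ0 : 0 < δ) (hδ1 : δ ≤ 1) :
    ∃ N : ℝ, 0 < N ∧
      ∀ a : ℝ → Matrix (Fin d) (Fin d) ℝ, Measurable a → (∀ t, inS d δ (a t)) →
      ∀ u : Pt d → ℝ, CinfC u → ∀ κ : ℝ, 2 ≤ κ → ∀ ρ : ℝ, 0 < ρ →
        ENNReal.ofReal (oscC (cyl d ρ 0 0) (fun z i j => Dxx i j u z)) ≤
          ENNReal.ofReal (N * κ ^ (((d : ℝ) + 2) / 2) *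
            Real.sqrt (⨍ z in cyl d (κ * ρ) 0 0,
              (Dt u z + ∑ i, ∑ j, a z.1 i j * Dxx i j u z) ^ 2)) +
          ENNReal.ofReal (N * κ⁻¹) *
            maxF 0 (fun z => |Dt u z + ∑ i, ∑ j, a z.1 i j * Dxx i j u z|) (0, 0) := by
  obtain ⟨N, hN, hentry⟩ := exists_meanOsc_Dxx_le d hδ0
  have hd₀ : (0 : ℝ) < d := by exact_mod_cast hd
  refine ⟨d * d * N, by positivity, fun a ha haS u hu κ hκ ρ hρ => ?_⟩
  refine (ofReal_oscC_le_sum_meanOsc _ fun i j => hu.measurable_Dxx i j).trans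
    ((Finset.sum_le_sum fun i _ => Finset.sum_le_sum fun j _ =>
      hentry ha haS hu hκ hρ i j).trans_eq ?_)
  simp only [Finset.sum_const, Finset.card_univ, Fintype.card_fin, nsmul_eq_mul]
  rw [← ENNReal.ofReal_natCast d, ← mul_assoc, ← ENNReal.ofReal_mul hd₀.le, mul_add, ← mul_assoc,
    ← ENNReal.ofReal_mul (by positivity), ← ENNReal.ofReal_mul (by positivity)]
  simp only [mul_assoc]
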